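/- arXiv:0802.2651 — 4 statements merged into one kernel-verified Lean document; each statement's English description precedes it below -/
import Mathlib

section
/- Let N be a positive squarefree integer, let P = (a, b) be a non-torsion integral point of E_N(ℚ), and let n ≥ 3 be an odd integer such that nP is integral. Then for every prime l not dividing 2n, ord_l(ψ_n(P)) = ((n² − 1)/2) · ord_l(gcd(a, N)). -/
/-- The congruent number curve `E_N : y² = x³ - N²x` over `ℚ`. -/
def congruentCurve (N : ℕ) : WeierstrassCurve.Affine ℚ :=
  { a₁ := 0, a₂ := 0, a₃ := 0, a₄ := -(N : ℚ) ^ 2, a₆ := 0 }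

/-- The congruent number curve `E_N : y² = x³ - N²x` over `ℤ`. -/
def congruentCurveZ (N : ℕ) : WeierstrassCurve ℤ :=
  { a₁ := 0, a₂ := 0, a₃ := 0, a₄ := -(N : ℤ) ^ 2, a₆ := 0 }

/-- The value `ψₙ(P)` of the `n`-th division polynomial of `E_N` at the integral point
`P = (a, b)`. -/
noncomputable def psiEN (N : ℕ) (a b : ℤ) (n : ℤ) : ℤ :=
  ((congruentCurveZ N).Ψ n).evalEval a b

/-- A rational point on a Weierstrass curve over `ℚ` is integral if it is an affine point
whose `x`-coordinate is an integer. -/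
def IsIntegralPoint {W : WeierstrassCurve.Affine ℚ} (P : W.Point) : Prop :=
  ∃ (x y : ℚ) (h : W.Nonsingular x y),
    P = WeierstrassCurve.Affine.Point.some x y h ∧ x.den = 1

/-!
Write `ψₙ = ψₙ(P)`. The group law gives `ψₙ₊₁ψₙ₋₁ = ψₙ²(x(P) - x(nP))`, and more generally
`ψₘ₊ₖψₘ₋ₖ = ψₘ²ψₖ²(x(kP) - x(mP))`, so `ψ` satisfies the elliptic relation. If `l ∣ ψₙ` while `nP`
is integral, then `l` divides one of `ψₙ₊₁` and `ψₙ₋₁`; but the elliptic relation propagates two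
consecutive zeros modulo `l` down to `ψ₂` and `ψ₃` or to `ψ₃` and `ψ₄`, which cannot both vanish at
a nonsingular point of the reduction. So `l` can divide `ψₙ` only if `P` is singular modulo `l`, and
for `l ≠ 2` this means `l ∣ a` and `l ∣ N`. In that case `E_N` is the quadratic twist by `l` of
`E_{N/l}`, homogeneity extracts a factor `l ^ ((n² - 1) / 2)` from `ψₙ`, and what remains is the
value of an odd division polynomial of `E_{N/l}` at `a/l`. Since `b² = l³ · f(a/l)`, where `f` is
the cubic defining `E_{N/l}`, a parity count gives `l ∣ f(a/l)`: modulo `l`, `a/l` is the abscissa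
of a nonsingular `2`-torsion point, at which odd division polynomials do not vanish.
-/

open WeierstrassCurve Polynomial

lemma nsmul_ne_zero_of_pos {G : Type*} [AddMonoid G] {g : G}
    (hg : ¬IsOfFinAddOrder g) {m : ℕ} (hm : 0 < m) : m • g ≠ 0 :=
  fun h ↦ hg (isOfFinAddOrder_iff_nsmul_eq_zero.mpr ⟨m, hm, h⟩)

section DivisionValues

variable {R : Type*} [CommRing R] {W : WeierstrassCurve R} {x y : R}

lemma evalEval_ψ₂ : W.ψ₂.evalEval x y = y - W.toAffine.negY x y := by
  rw [ψ₂, Affine.evalEval_polynomialY, Affine.negY]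
  ring

lemma eval_Ψ₃_eq (h : W.toAffine.Equation x y) :
    W.Ψ₃.eval x = (3 * x + W.a₂) * W.ψ₂.evalEval x y ^ 2 +
      W.a₁ * W.toAffine.polynomialX.evalEval x y * W.ψ₂.evalEval x y -
      W.toAffine.polynomialX.evalEval x y ^ 2 := by
  have e := (Affine.equation_iff ..).mp h
  have hΨ₃ : W.Ψ₃.eval x = 3 * x ^ 4 + W.b₂ * x ^ 3 + 3 * W.b₄ * x ^ 2 + 3 * W.b₆ * x + W.b₈ := by
    simp [Ψ₃]
  rw [hΨ₃, ψ₂, Affine.evalEval_polynomialX, Affine.evalEval_polynomialY, b₂, b₄, b₆, b₈]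
  linear_combination -(12 * x + W.a₁ ^ 2 + 4 * W.a₂) * e

lemma eval_preΨ₄_eq (h : W.toAffine.Equation x y) :
    W.preΨ₄.eval x =
      (W.a₁ * W.ψ₂.evalEval x y - 2 * W.toAffine.polynomialX.evalEval x y) * W.Ψ₃.eval x -
        W.ψ₂.evalEval x y ^ 4 := by
  have e := (Affine.equation_iff ..).mp h
  have hΨ₃ : W.Ψ₃.eval x = 3 * x ^ 4 + W.b₂ * x ^ 3 + 3 * W.b₄ * x ^ 2 + 3 * W.b₆ * x + W.b₈ := by
    simp [Ψ₃]
  have hpreΨ₄ : W.preΨ₄.eval x = 2 * x ^ 6 + W.b₂ * x ^ 5 + 5 * W.b₄ * x ^ 4 + 10 * W.b₆ * x ^ 3 +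
      10 * W.b₈ * x ^ 2 + (W.b₂ * W.b₈ - W.b₄ * W.b₆) * x + (W.b₄ * W.b₈ - W.b₆ ^ 2) := by
    simp [preΨ₄]
  have hψ₂ : W.ψ₂.evalEval x y ^ 2 = 4 * x ^ 3 + W.b₂ * x ^ 2 + 2 * W.b₄ * x + W.b₆ := by
    rw [ψ₂, Affine.evalEval_polynomialY, b₂, b₄, b₆]
    linear_combination 4 * e
  rw [hΨ₃, hpreΨ₄, show W.ψ₂.evalEval x y ^ 4 = (W.ψ₂.evalEval x y ^ 2) ^ 2 by ring, hψ₂, ψ₂,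
    Affine.evalEval_polynomialX, Affine.evalEval_polynomialY, b₂, b₄, b₆, b₈]
  ring

/-- The symmetric form `B(u, v, r)` that vanishes at the `x`-coordinates of three points with
`P ± Q ± R = O` for some choice of signs: `B(x(P), x(Q), T)` is the quadratic polynomial in `T` with
roots `x(P + Q)` and `x(P - Q)` and leading coefficient `(x(P) - x(Q))²`. -/
def kummerForm (W : WeierstrassCurve R) (u v r : R) : R :=
  (u * v) ^ 2 + (v * r) ^ 2 + (r * u) ^ 2 - 2 * u * v * r * (u + v + r) - W.b₂ * (u * v * r)
    - W.b₄ * (u * v + v * r + r * u) - W.b₆ * (u + v + r) - W.b₈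

lemma kummerForm_swap₁₃ (u v r : R) : kummerForm W u v r = kummerForm W r v u := by
  rw [kummerForm, kummerForm]
  ring

lemma kummerForm_swap₂₃ (u v r : R) : kummerForm W u v r = kummerForm W u r v := by
  rw [kummerForm, kummerForm]
  ring

lemma kummerForm_self (h : W.toAffine.Equation x y) (r : R) :
    kummerForm W x x r = W.ψ₂.evalEval x y ^ 2 * (x - r) - W.Ψ₃.eval x := by
  have e := (Affine.equation_iff ..).mp h
  simp only [Ψ₃, ψ₂, Affine.evalEval_polynomialY, kummerForm, b₂, b₄, b₆, b₈, eval_add, eval_mul,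
    eval_pow, eval_C, eval_X, eval_ofNat]
  linear_combination -4 * (x - r) * e

variable (W x y) in
/-- The value `ψₙ(x, y)` of the `n`-th division polynomial of `W`, as a sequence in `n : ℕ`. -/
noncomputable def divisionValue (n : ℕ) : R :=
  (W.ψ n).evalEval x y

lemma divisionValue_zero : divisionValue W x y 0 = 0 := by
  simp [divisionValue]

lemma divisionValue_one : divisionValue W x y 1 = 1 := by
  simp [divisionValue]

lemma divisionValue_two : divisionValue W x y 2 = W.ψ₂.evalEval x y := by
  simp [divisionValue]

lemma divisionValue_three : divisionValue W x y 3 = W.Ψ₃.eval x := by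
  simp [divisionValue, evalEval_C]

lemma divisionValue_four :
    divisionValue W x y 4 = W.preΨ₄.eval x * W.ψ₂.evalEval x y := by
  simp [divisionValue, evalEval_C]

lemma divisionValue_even (m : ℕ) :
    divisionValue W x y (2 * (m + 2)) * W.ψ₂.evalEval x y =
      divisionValue W x y (m + 1) ^ 2 * divisionValue W x y (m + 2) * divisionValue W x y (m + 4) -
        divisionValue W x y m * divisionValue W x y (m + 2) * divisionValue W x y (m + 3) ^ 2 := by
  have h := congrArg (evalEval x y) (W.ψ_even (m + 2))
  rw [show (m + 2 - 1 : ℤ) = m + 1 by ring, show (m + 2 - 2 : ℤ) = m by ring] at h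
  simpa [divisionValue, add_assoc, mul_assoc] using h

lemma divisionValue_odd (m : ℕ) :
    divisionValue W x y (2 * (m + 1) + 1) =
      divisionValue W x y (m + 3) * divisionValue W x y (m + 1) ^ 3 -
        divisionValue W x y m * divisionValue W x y (m + 2) ^ 3 := by
  have h := congrArg (evalEval x y) (W.ψ_odd (m + 1))
  rw [show (m + 1 - 1 : ℤ) = m by ring] at h
  simpa [divisionValue, add_assoc] using h

lemma map_divisionValue {S : Type*} [CommRing S] (f : R →+* S) (n : ℕ) :
    f (divisionValue W x y n) = divisionValue (W.map f) (f x) (f y) n := by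
  rw [divisionValue, divisionValue, map_ψ, map_mapRingHom_evalEval]

end DivisionValues

section Points

variable {F : Type*} [Field F] {W : Affine F}

/-- The value `y(P) - y(-P) = 2y + a₁x + a₃` of the division polynomial `ψ₂` at a point `P` of a
Weierstrass curve, with the junk value `0` at the point at infinity. -/
noncomputable def psiTwo : W.Point → F
  | 0 => 0
  | .some x y _ => y - W.negY x y

lemma eq_or_eq_neg_of_xRep_zero_eq {P Q : W.Point} (hP : P ≠ 0) (hQ : Q ≠ 0)
    (h : P.xRep 0 = Q.xRep 0) : P = Q ∨ P = -Q := by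
  rcases P with _ | ⟨x₁, y₁, h₁⟩
  · exact absurd rfl hP
  rcases Q with _ | ⟨x₂, y₂, h₂⟩
  · exact absurd rfl hQ
  exact Affine.Point.X_eq_iff.mp h

lemma psiTwo_some {x y : F} (h : W.Nonsingular x y) :
    psiTwo (.some x y h) = W.ψ₂.evalEval x y :=
  evalEval_ψ₂.symm

variable [DecidableEq F]

lemma addX_slope_mul_sq {x₁ x₂ y₁ y₂ : F} (hx : x₁ ≠ x₂) :
    W.addX x₁ x₂ (W.slope x₁ x₂ y₁ y₂) * (x₁ - x₂) ^ 2 =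
      (y₁ - y₂) ^ 2 + W.a₁ * (y₁ - y₂) * (x₁ - x₂) - (W.a₂ + x₁ + x₂) * (x₁ - x₂) ^ 2 := by
  have hd : x₁ - x₂ ≠ 0 := sub_ne_zero.mpr hx
  rw [Affine.slope_of_X_ne hx, Affine.addX]
  field_simp
  ring

lemma xRep_sub_sub_xRep_add_mul_sq {P Q : W.Point} (hP : P ≠ 0) (hQ : Q ≠ 0)
    (hx : P.xRep 0 ≠ Q.xRep 0) :
    ((P - Q).xRep 0 - (P + Q).xRep 0) * (P.xRep 0 - Q.xRep 0) ^ 2 = psiTwo P * psiTwo Q := by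
  rcases P with _ | ⟨x₁, y₁, h₁⟩
  · exact absurd rfl hP
  rcases Q with _ | ⟨x₂, y₂, h₂⟩
  · exact absurd rfl hQ
  replace hx : x₁ ≠ x₂ := hx
  simp only [sub_eq_add_neg (Affine.Point.some ..), Affine.Point.neg_some,
    Affine.Point.add_of_X_ne hx, Affine.Point.xRep_some, Matrix.cons_val_zero, psiTwo]
  rw [sub_mul, addX_slope_mul_sq hx, addX_slope_mul_sq hx, Affine.negY, Affine.negY]
  ring

lemma xRep_add_sub_mul_xRep_sub_sub_mul_sq {P Q : W.Point} (hP : P ≠ 0) (hQ : Q ≠ 0)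
    (hx : P.xRep 0 ≠ Q.xRep 0) (r : F) :
    ((P + Q).xRep 0 - r) * ((P - Q).xRep 0 - r) * (P.xRep 0 - Q.xRep 0) ^ 2 =
      kummerForm W (P.xRep 0) (Q.xRep 0) r := by
  rcases P with _ | ⟨x₁, y₁, h₁⟩
  · exact absurd rfl hP
  rcases Q with _ | ⟨x₂, y₂, h₂⟩
  · exact absurd rfl hQ
  replace hx : x₁ ≠ x₂ := hx
  have e₁ := (Affine.equation_iff ..).mp h₁.1
  have e₂ := (Affine.equation_iff ..).mp h₂.1
  simp only [sub_eq_add_neg (Affine.Point.some ..), Affine.Point.neg_some,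
    Affine.Point.add_of_X_ne hx, Affine.Point.xRep_some, Matrix.cons_val_zero]
  refine mul_right_cancel₀ (pow_ne_zero 2 (sub_ne_zero.mpr hx)) ?_
  set c₁ := W.a₁ * x₁ + W.a₃
  set c₂ := W.a₁ * x₂ + W.a₃
  set f₁ := x₁ ^ 3 + W.a₂ * x₁ ^ 2 + W.a₄ * x₁ + W.a₆
  set f₂ := x₂ ^ 3 + W.a₂ * x₂ ^ 2 + W.a₄ * x₂ + W.a₆
  set q := 2 * y₁ * y₂ + c₂ * y₁ + c₁ * y₂
  set t := (W.a₂ + x₁ + x₂ + r) * (x₁ - x₂) ^ 2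
  have h_add : (W.addX x₁ x₂ (W.slope x₁ x₂ y₁ y₂) - r) * (x₁ - x₂) ^ 2 = f₁ + f₂ - q - t := by
    linear_combination addX_slope_mul_sq (y₁ := y₁) (y₂ := y₂) hx + e₁ + e₂
  have h_sub : (W.addX x₁ x₂ (W.slope x₁ x₂ y₁ (W.negY x₂ y₂)) - r) * (x₁ - x₂) ^ 2 =
      f₁ + f₂ + q + c₁ * c₂ - t := by
    have := addX_slope_mul_sq (W := W) (y₁ := y₁) (y₂ := W.negY x₂ y₂) hx
    rw [show y₁ - W.negY x₂ y₂ = y₁ + y₂ + c₂ by rw [Affine.negY]; ring] at this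
    linear_combination this + e₁ + e₂
  have h_q : q * (q + c₁ * c₂) = 4 * f₁ * f₂ + f₁ * c₂ ^ 2 + f₂ * c₁ ^ 2 := by
    linear_combination (4 * (y₂ ^ 2 + c₂ * y₂) + c₂ ^ 2) * e₁ + (4 * f₁ + c₁ ^ 2) * e₂
  calc _ = (f₁ + f₂ - q - t) * (f₁ + f₂ + q + c₁ * c₂ - t) := by rw [← h_add, ← h_sub]; ring
    _ = (f₁ + f₂ - t) * (f₁ + f₂ - t + c₁ * c₂) - q * (q + c₁ * c₂) := by ring
    _ = _ := by rw [h_q, kummerForm, b₂, b₄, b₆, b₈]; ring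

lemma evalEval_sq_mul_xRep_two_nsmul {x y : F} (h : W.Nonsingular x y)
    (hψ : W.ψ₂.evalEval x y ≠ 0) :
    W.ψ₂.evalEval x y ^ 2 * (2 • Affine.Point.some x y h).xRep 0 =
      W.ψ₂.evalEval x y ^ 2 * x - W.Ψ₃.eval x := by
  have hy : y ≠ W.negY x y := sub_ne_zero.mp (evalEval_ψ₂ (W := W) ▸ hψ)
  rw [two_nsmul, Affine.Point.add_self_of_Y_ne hy, Affine.Point.xRep_some,
    Affine.slope_of_Y_ne rfl hy, ← evalEval_ψ₂, Affine.addX, eval_Ψ₃_eq h.1,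
    Affine.evalEval_polynomialX, Matrix.cons_val_zero]
  field_simp
  ring

lemma psiTwo_two_nsmul {x y : F} (h : W.Nonsingular x y) (hψ : W.ψ₂.evalEval x y ≠ 0) :
    W.ψ₂.evalEval x y ^ 3 * psiTwo (2 • Affine.Point.some x y h) = W.preΨ₄.eval x := by
  have hy : y ≠ W.negY x y := sub_ne_zero.mp (evalEval_ψ₂ (W := W) ▸ hψ)
  have hx := evalEval_sq_mul_xRep_two_nsmul h hψ
  rw [two_nsmul, Affine.Point.add_self_of_Y_ne hy, Affine.Point.xRep_some,
    Matrix.cons_val_zero] at hx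
  have hslope : W.slope x x y y * W.ψ₂.evalEval x y = -W.polynomialX.evalEval x y := by
    rw [Affine.slope_of_Y_ne rfl hy, ← evalEval_ψ₂, div_mul_cancel₀ _ hψ,
      Affine.evalEval_polynomialX]
    ring
  have hψ₂ : W.ψ₂.evalEval x y = 2 * y + W.a₁ * x + W.a₃ := Affine.evalEval_polynomialY ..
  rw [two_nsmul, Affine.Point.add_self_of_Y_ne hy, psiTwo, eval_preΨ₄_eq h.1]
  generalize W.slope x x y y = s at *
  calc _ = -(2 * (s * W.ψ₂.evalEval x y) + W.a₁ * W.ψ₂.evalEval x y) *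
        (W.ψ₂.evalEval x y ^ 2 * W.addX x x s - W.ψ₂.evalEval x y ^ 2 * x) -
          W.ψ₂.evalEval x y ^ 3 * (2 * y + W.a₁ * x + W.a₃) := by
        rw [Affine.addY, Affine.negY, Affine.negY, Affine.negAddY]; ring
    _ = _ := by rw [hx, hslope, ← hψ₂]; ring

lemma psiTwo_ne_zero {P : W.Point} (hP : 2 • P ≠ 0) : psiTwo P ≠ 0 := by
  rcases P with _ | ⟨x, y, h⟩
  · exact absurd (smul_zero 2) hP
  · refine fun hψ ↦ hP ?_
    rw [two_nsmul, Affine.Point.add_self_of_Y_eq (sub_eq_zero.mp hψ)]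

lemma psiTwo_sq_mul_xRep_two_nsmul_sub {P : W.Point} (hP : 2 • P ≠ 0) (r : F) :
    psiTwo P ^ 2 * ((2 • P).xRep 0 - r) = kummerForm W (P.xRep 0) (P.xRep 0) r := by
  rcases P with _ | ⟨x, y, h⟩
  · exact absurd (smul_zero 2) hP
  have hψ := psiTwo_some h ▸ psiTwo_ne_zero hP
  rw [psiTwo_some, Affine.Point.xRep_some, Matrix.cons_val_zero, kummerForm_self h.1]
  linear_combination evalEval_sq_mul_xRep_two_nsmul h hψ

/-- The `x`-coordinate of `nP`, with the junk value `1` (from `xRep`) when `nP = O`. -/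
noncomputable def xNsmul (P : W.Point) (n : ℕ) : F :=
  (n • P).xRep 0

lemma xNsmul_one_some {x y : F} (h : W.Nonsingular x y) : xNsmul (.some x y h) 1 = x := by
  simp [xNsmul]

lemma xNsmul_ne {P : W.Point} (hP : ¬IsOfFinAddOrder P) {m k : ℕ} (hk : 0 < k) (hkm : k < m) :
    xNsmul P m ≠ xNsmul P k := by
  intro h
  rcases eq_or_eq_neg_of_xRep_zero_eq (nsmul_ne_zero_of_pos hP (hk.trans hkm))
    (nsmul_ne_zero_of_pos hP hk) h with h | h
  · exact hkm.ne' (injective_nsmul_iff_not_isOfFinAddOrder.mpr hP h)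
  · rw [eq_neg_iff_add_eq_zero, ← add_nsmul] at h
    exact nsmul_ne_zero_of_pos hP (by omega) h

lemma xNsmul_sub_xNsmul_mul_sq {P : W.Point} (hP : ¬IsOfFinAddOrder P) {m k : ℕ}
    (hk : 0 < k) (hkm : k < m) :
    (xNsmul P (m - k) - xNsmul P (m + k)) * (xNsmul P m - xNsmul P k) ^ 2 =
      psiTwo (m • P) * psiTwo (k • P) := by
  rw [xNsmul, xNsmul, xNsmul, xNsmul, sub_nsmul P hkm.le, ← sub_eq_add_neg, add_nsmul]
  exact xRep_sub_sub_xRep_add_mul_sq (nsmul_ne_zero_of_pos hP (hk.trans hkm))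
    (nsmul_ne_zero_of_pos hP hk) (xNsmul_ne hP hk hkm)

lemma kummerForm_nsmul {P : W.Point} (hP : ¬IsOfFinAddOrder P) {m k : ℕ} (hk : 0 < k)
    (hkm : k < m) (r : F) :
    kummerForm W (xNsmul P m) (xNsmul P k) r =
      (xNsmul P (m + k) - r) * (xNsmul P (m - k) - r) *
        (xNsmul P m - xNsmul P k) ^ 2 := by
  rw [xNsmul, xNsmul, xNsmul, xNsmul, sub_nsmul P hkm.le, ← sub_eq_add_neg, add_nsmul]
  exact (xRep_add_sub_mul_xRep_sub_sub_mul_sq (nsmul_ne_zero_of_pos hP (hk.trans hkm))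
    (nsmul_ne_zero_of_pos hP hk) (xNsmul_ne hP hk hkm) r).symm

lemma kummerForm_nsmul_self {P : W.Point} (hP : ¬IsOfFinAddOrder P) {m : ℕ} (hm : 0 < m) (r : F) :
    kummerForm W (xNsmul P m) (xNsmul P m) r = psiTwo (m • P) ^ 2 * (xNsmul P (2 * m) - r) := by
  rw [xNsmul, xNsmul, mul_nsmul']
  refine (psiTwo_sq_mul_xRep_two_nsmul_sub ?_ r).symm
  rw [← mul_nsmul']
  exact nsmul_ne_zero_of_pos hP (by omega)

lemma evalEval_sq_mul_sub_xNsmul_two {x y : F} (h : W.Nonsingular x y)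
    (hψ : W.ψ₂.evalEval x y ≠ 0) :
    W.ψ₂.evalEval x y ^ 2 * (x - xNsmul (.some x y h) 2) = W.Ψ₃.eval x := by
  rw [xNsmul]
  linear_combination -evalEval_sq_mul_xRep_two_nsmul h hψ

end Points

section InfiniteOrder

variable {F : Type*} [Field F] [DecidableEq F] {W : Affine F} {x y : F} (h : W.Nonsingular x y)

lemma divisionValue_odd_eq {k : ℕ}
    (h₁ : divisionValue W x y (k + 2) * divisionValue W x y k =
      divisionValue W x y (k + 1) ^ 2 * (x - xNsmul (.some x y h) (k + 1)))
    (h₂ : divisionValue W x y (k + 3) * divisionValue W x y (k + 1) =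
      divisionValue W x y (k + 2) ^ 2 * (x - xNsmul (.some x y h) (k + 2))) :
    divisionValue W x y (2 * (k + 1) + 1) =
      divisionValue W x y (k + 1) ^ 2 * divisionValue W x y (k + 2) ^ 2 *
        (xNsmul (.some x y h) (k + 1) - xNsmul (.some x y h) (k + 2)) := by
  rw [divisionValue_odd]
  linear_combination divisionValue W x y (k + 1) ^ 2 * h₂ - divisionValue W x y (k + 2) ^ 2 * h₁

variable (hP : ¬IsOfFinAddOrder (Affine.Point.some x y h))

include hP

lemma evalEval_ψ₂_ne_zero : W.ψ₂.evalEval x y ≠ 0 := by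
  rw [← psiTwo_some h]
  exact psiTwo_ne_zero (nsmul_ne_zero_of_pos hP two_pos)

lemma divisionValue_even_eq {k : ℕ}
    (h₁ : divisionValue W x y (k + 2) * divisionValue W x y k =
      divisionValue W x y (k + 1) ^ 2 * (x - xNsmul (.some x y h) (k + 1)))
    (h₂ : divisionValue W x y (k + 3) * divisionValue W x y (k + 1) =
      divisionValue W x y (k + 2) ^ 2 * (x - xNsmul (.some x y h) (k + 2)))
    (h₃ : divisionValue W x y (k + 4) * divisionValue W x y (k + 2) =
      divisionValue W x y (k + 3) ^ 2 * (x - xNsmul (.some x y h) (k + 3))) :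
    divisionValue W x y (2 * (k + 2)) =
      divisionValue W x y (k + 2) ^ 4 * psiTwo ((k + 2) • Affine.Point.some x y h) := by
  refine mul_right_cancel₀ (evalEval_ψ₂_ne_zero h hP) ?_
  have hsub : (xNsmul (.some x y h) (k + 1) - xNsmul (.some x y h) (k + 3)) *
      (x - xNsmul (.some x y h) (k + 2)) ^ 2 =
        psiTwo ((k + 2) • Affine.Point.some x y h) * W.ψ₂.evalEval x y := by
    have := xNsmul_sub_xNsmul_mul_sq hP one_pos (show 1 < k + 2 by omega)
    rw [xNsmul_one_some, one_nsmul, show k + 2 - 1 = k + 1 by omega] at this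
    rw [← psiTwo_some h]
    linear_combination this
  set w := divisionValue W x y
  calc w (2 * (k + 2)) * W.ψ₂.evalEval x y
      = (w (k + 3) * w (k + 1)) ^ 2 *
          (xNsmul (.some x y h) (k + 1) - xNsmul (.some x y h) (k + 3)) := by
        rw [divisionValue_even]
        linear_combination w (k + 1) ^ 2 * h₃ - w (k + 3) ^ 2 * h₁
    _ = w (k + 2) ^ 4 * ((xNsmul (.some x y h) (k + 1) - xNsmul (.some x y h) (k + 3)) *
          (x - xNsmul (.some x y h) (k + 2)) ^ 2) := by rw [h₂]; ring
    _ = _ := by rw [hsub]; ring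

lemma divisionValue_four_mul_two :
    divisionValue W x y 4 * divisionValue W x y 2 =
      divisionValue W x y 3 ^ 2 * (x - xNsmul (.some x y h) 3) := by
  have hψ := evalEval_ψ₂_ne_zero h hP
  have hsub := xNsmul_sub_xNsmul_mul_sq hP one_pos one_lt_two
  rw [show 2 - 1 = 1 from rfl, xNsmul_one_some, one_nsmul, psiTwo_some] at hsub
  rw [divisionValue_four, divisionValue_three, divisionValue_two, ← psiTwo_two_nsmul h hψ,
    ← evalEval_sq_mul_sub_xNsmul_two h hψ]
  linear_combination -W.ψ₂.evalEval x y ^ 4 * hsub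

lemma divisionValue_succ_mul_pred_of_even {j : ℕ}
    (ih : ∀ i < 2 * j + 3, divisionValue W x y (i + 2) * divisionValue W x y i =
      divisionValue W x y (i + 1) ^ 2 * (x - xNsmul (.some x y h) (i + 1))) :
    divisionValue W x y (2 * j + 5) * divisionValue W x y (2 * j + 3) =
      divisionValue W x y (2 * j + 4) ^ 2 * (x - xNsmul (.some x y h) (2 * j + 4)) := by
  have h_pred := divisionValue_odd_eq h (ih j (by omega)) (ih (j + 1) (by omega))
  have h_succ := divisionValue_odd_eq h (ih (j + 1) (by omega)) (ih (j + 2) (by omega))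
  have h_self := divisionValue_even_eq h hP (ih j (by omega)) (ih (j + 1) (by omega))
    (ih (j + 2) (by omega))
  have hk : (xNsmul (.some x y h) (j + 3) - xNsmul (.some x y h) (j + 2)) *
      (xNsmul (.some x y h) (j + 1) - xNsmul (.some x y h) (j + 2)) *
        (x - xNsmul (.some x y h) (j + 2)) ^ 2 =
      psiTwo ((j + 2) • Affine.Point.some x y h) ^ 2 *
        (xNsmul (.some x y h) (2 * (j + 2)) - x) := by
    rw [← kummerForm_nsmul_self hP (by omega), kummerForm_swap₂₃]
    have := kummerForm_nsmul hP one_pos (show 1 < j + 2 by omega) (xNsmul (.some x y h) (j + 2))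
    rw [xNsmul_one_some, show j + 2 - 1 = j + 1 from rfl, show j + 2 + 1 = j + 3 from rfl] at this
    rw [this]
    ring
  have h_rel := ih (j + 1) (by omega)
  rw [show 2 * j + 5 = 2 * (j + 1 + 1) + 1 by ring, show 2 * j + 3 = 2 * (j + 1) + 1 by ring,
    show 2 * j + 4 = 2 * (j + 2) by ring, h_pred, h_succ, h_self]
  simp only [add_assoc, Nat.reduceAdd] at h_rel ⊢
  set w := divisionValue W x y
  set X := xNsmul (.some x y h)
  calc _ = -w (j + 2) ^ 4 * (w (j + 3) * w (j + 1)) ^ 2 *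
        ((X (j + 3) - X (j + 2)) * (X (j + 1) - X (j + 2))) := by ring
    _ = -w (j + 2) ^ 8 * ((X (j + 3) - X (j + 2)) * (X (j + 1) - X (j + 2)) *
        (x - X (j + 2)) ^ 2) := by rw [h_rel]; ring
    _ = _ := by rw [hk]; ring

lemma divisionValue_succ_mul_pred_of_odd {j : ℕ}
    (ih : ∀ i < 2 * j + 4, divisionValue W x y (i + 2) * divisionValue W x y i =
      divisionValue W x y (i + 1) ^ 2 * (x - xNsmul (.some x y h) (i + 1))) :
    divisionValue W x y (2 * j + 6) * divisionValue W x y (2 * j + 4) =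
      divisionValue W x y (2 * j + 5) ^ 2 * (x - xNsmul (.some x y h) (2 * j + 5)) := by
  have h_pred := divisionValue_even_eq h hP (ih j (by omega)) (ih (j + 1) (by omega))
    (ih (j + 2) (by omega))
  have h_succ := divisionValue_even_eq h hP (ih (j + 1) (by omega)) (ih (j + 2) (by omega))
    (ih (j + 3) (by omega))
  have h_self := divisionValue_odd_eq h (ih (j + 1) (by omega)) (ih (j + 2) (by omega))
  have h_sub := xNsmul_sub_xNsmul_mul_sq hP (show 0 < j + 2 by omega) (show j + 2 < j + 3 by omega)
  rw [show j + 3 - (j + 2) = 1 by omega, xNsmul_one_some,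
    show j + 3 + (j + 2) = 2 * (j + 1 + 1) + 1 by ring] at h_sub
  rw [show 2 * j + 5 = 2 * (j + 1 + 1) + 1 by ring, show 2 * j + 4 = 2 * (j + 2) by ring,
    show 2 * j + 6 = 2 * (j + 1 + 2) by ring, h_pred, h_succ, h_self]
  linear_combination
    -(divisionValue W x y (j + 2) ^ 4 * divisionValue W x y (j + 3) ^ 4) * h_sub

theorem divisionValue_succ_mul_pred (k : ℕ) :
    divisionValue W x y (k + 2) * divisionValue W x y k =
      divisionValue W x y (k + 1) ^ 2 * (x - xNsmul (.some x y h) (k + 1)) := by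
  induction k using Nat.strong_induction_on with
  | h k ih =>
    match k with
    | 0 => simp [divisionValue_zero, xNsmul_one_some]
    | 1 => simp [divisionValue_one, divisionValue_two, divisionValue_three,
        evalEval_sq_mul_sub_xNsmul_two h (evalEval_ψ₂_ne_zero h hP)]
    | 2 => exact divisionValue_four_mul_two h hP
    | k + 3 =>
      obtain ⟨j, rfl | rfl⟩ := k.even_or_odd'
      · exact divisionValue_succ_mul_pred_of_even h hP ih
      · exact divisionValue_succ_mul_pred_of_odd h hP ih

lemma divisionValue_ne_zero {n : ℕ} (hn : 0 < n) : divisionValue W x y n ≠ 0 := by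
  induction n using Nat.strong_induction_on with
  | h n ih =>
    match n with
    | 1 => exact divisionValue_one (W := W) ▸ one_ne_zero
    | 2 => exact divisionValue_two (W := W) ▸ evalEval_ψ₂_ne_zero h hP
    | n + 3 =>
      refine left_ne_zero_of_mul (b := divisionValue W x y (n + 1)) ?_
      rw [divisionValue_succ_mul_pred h hP (n + 1)]
      refine mul_ne_zero (pow_ne_zero 2 (ih (n + 2) (by omega) (by omega))) ?_
      have := xNsmul_ne hP one_pos (show 1 < n + 2 by omega)
      rw [xNsmul_one_some] at this
      exact sub_ne_zero.mpr this.symm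

lemma divisionValue_four_factors {m k : ℕ} (hm : 0 < m)
    (h_succ : divisionValue W x y (m + 2 + k) * divisionValue W x y (m + 2 - k) =
      divisionValue W x y (m + 2) ^ 2 * divisionValue W x y k ^ 2 *
        (xNsmul (.some x y h) k - xNsmul (.some x y h) (m + 2)))
    (h_pred : divisionValue W x y (m + k) * divisionValue W x y (m - k) =
      divisionValue W x y m ^ 2 * divisionValue W x y k ^ 2 *
        (xNsmul (.some x y h) k - xNsmul (.some x y h) m)) :
    divisionValue W x y (m + 2 + k) * divisionValue W x y (m - k) *
        (divisionValue W x y (m + k) * divisionValue W x y (m + 2 - k)) =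
      divisionValue W x y (m + 1) ^ 4 * divisionValue W x y k ^ 4 *
        kummerForm W (xNsmul (.some x y h) (m + 1)) x (xNsmul (.some x y h) k) := by
  have h_form := kummerForm_nsmul hP one_pos (show 1 < m + 1 by omega) (xNsmul (.some x y h) k)
  rw [xNsmul_one_some, show m + 1 - 1 = m from rfl, show m + 1 + 1 = m + 2 from rfl] at h_form
  set w := divisionValue W x y
  set X := xNsmul (.some x y h)
  have h_rel : w (m + 2) * w m = w (m + 1) ^ 2 * (x - X (m + 1)) :=
    divisionValue_succ_mul_pred h hP m
  calc _ = (w (m + 2 + k) * w (m + 2 - k)) * (w (m + k) * w (m - k)) := by ring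
    _ = (w (m + 2) * w m) ^ 2 * w k ^ 4 * ((X k - X (m + 2)) * (X k - X m)) := by
      rw [h_succ, h_pred]; ring
    _ = _ := by rw [h_rel, h_form]; ring

lemma divisionValue_add_two_mul_sub_two {m : ℕ} (hm : 0 < m) :
    divisionValue W x y (m + 3) * divisionValue W x y (m - 1) =
      divisionValue W x y (m + 1) ^ 2 * divisionValue W x y 2 ^ 2 *
        (xNsmul (.some x y h) 2 - xNsmul (.some x y h) (m + 1)) := by
  have hx := xNsmul_one_some h
  have h_rel := divisionValue_succ_mul_pred h hP
  have h_prod := divisionValue_four_factors h hP (k := 1) hm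
    (by simp [h_rel, hx, divisionValue_one])
    (by obtain ⟨m, rfl⟩ := Nat.exists_eq_add_one.mpr hm; simp [h_rel, hx, divisionValue_one])
  have h_form := kummerForm_nsmul_self hP one_pos (xNsmul (.some x y h) (m + 1))
  rw [hx, one_nsmul, psiTwo_some, ← divisionValue_two, show 2 * 1 = 2 from rfl] at h_form
  rw [hx, kummerForm_swap₁₃, h_form, divisionValue_one, show m + 2 + 1 = m + 3 from rfl,
    show m + 2 - 1 = m + 1 from rfl] at h_prod
  refine mul_right_cancel₀ (pow_ne_zero 2 (divisionValue_ne_zero h hP m.succ_pos)) ?_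
  linear_combination h_prod

-- `kummerForm` of `x(mP), x, x(kP)` is symmetric, so the relations for `(m ± 1, k)` can be traded
-- for those for `(m, k ± 1)`.
theorem divisionValue_add_mul_sub {m k : ℕ} (hk : 0 < k) (hkm : k ≤ m) :
    divisionValue W x y (m + k) * divisionValue W x y (m - k) =
      divisionValue W x y m ^ 2 * divisionValue W x y k ^ 2 *
        (xNsmul (.some x y h) k - xNsmul (.some x y h) m) := by
  have hx := xNsmul_one_some h
  have h_rel := divisionValue_succ_mul_pred h hP
  induction k using Nat.strong_induction_on generalizing m with
  | h i ih =>
    obtain ⟨m, rfl⟩ := Nat.exists_eq_add_one.mpr (hk.trans_le hkm)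
    match i with
    | 1 => simp [h_rel, hx, divisionValue_one]
    | 2 => exact divisionValue_add_two_mul_sub_two h hP (by omega)
    | k + 3 =>
      have h_prod := divisionValue_four_factors h hP (show 0 < m by omega)
        (ih (k + 2) (by omega) (by omega) (show k + 2 ≤ m + 2 by omega))
        (ih (k + 2) (by omega) (by omega) (show k + 2 ≤ m by omega))
      have h_form := kummerForm_nsmul hP one_pos (show 1 < k + 2 by omega)
        (xNsmul (.some x y h) (m + 1))
      have h_old := ih (k + 1) (by omega) (by omega) (show k + 1 ≤ m + 1 by omega)
      refine mul_right_cancel₀ (mul_ne_zero (divisionValue_ne_zero h hP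
        (show 0 < m + 1 + (k + 1) by omega)) (divisionValue_ne_zero h hP
        (show 0 < m + 1 - (k + 1) by omega))) ?_
      rw [hx, show k + 2 + 1 = k + 3 from rfl, show k + 2 - 1 = k + 1 from rfl] at h_form
      rw [kummerForm_swap₁₃, h_form, show m + 2 + (k + 2) = m + 1 + (k + 3) by omega,
        show m - (k + 2) = m + 1 - (k + 3) by omega, show m + (k + 2) = m + 1 + (k + 1) by omega,
        show m + 2 - (k + 2) = m + 1 - (k + 1) by omega] at h_prod
      rw [h_prod, h_old]
      linear_combination -divisionValue W x y (m + 1) ^ 4 *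
        (xNsmul (.some x y h) (k + 3) - xNsmul (.some x y h) (m + 1)) *
        (xNsmul (.some x y h) (k + 1) - xNsmul (.some x y h) (m + 1)) *
        (divisionValue W x y (k + 3) * divisionValue W x y (k + 1) +
          divisionValue W x y (k + 2) ^ 2 * (x - xNsmul (.some x y h) (k + 2))) * h_rel (k + 1)

theorem divisionValue_elliptic {m k : ℕ} (hkm : k ≤ m) :
    divisionValue W x y (m + 1 + (k + 1)) * divisionValue W x y (m - k) =
      divisionValue W x y (m + 2) * divisionValue W x y m * divisionValue W x y (k + 1) ^ 2 -
        divisionValue W x y (k + 2) * divisionValue W x y k * divisionValue W x y (m + 1) ^ 2 := by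
  have h_eq := divisionValue_add_mul_sub h hP k.succ_pos (Nat.succ_le_succ hkm)
  rw [Nat.succ_sub_succ] at h_eq
  rw [h_eq, divisionValue_succ_mul_pred h hP, divisionValue_succ_mul_pred h hP]
  ring

end InfiniteOrder

section ConsecutiveZeros

lemma ne_zero_or_succ_ne_zero_of_somos {D : Type*} [CommRing D] [NoZeroDivisors D] {w : ℕ → D}
    (h_four : ∀ i, w (i + 4) * w i = w (i + 3) * w (i + 1) * w 2 ^ 2 - w 3 * w 1 * w (i + 2) ^ 2)
    (h_five : ∀ i, w (i + 6) * w i = w (i + 4) * w (i + 2) * w 3 ^ 2 - w 4 * w 2 * w (i + 3) ^ 2)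
    (h₁ : w 1 ≠ 0) (h₂ : w 2 ≠ 0 ∨ w 3 ≠ 0) (h₃ : w 3 ≠ 0 ∨ w 4 ≠ 0) {n : ℕ} (hn : 0 < n) :
    w n ≠ 0 ∨ w (n + 1) ≠ 0 := by
  induction n using Nat.strong_induction_on with
  | h n ih =>
    match n with
    | 1 => exact Or.inl h₁
    | 2 => exact h₂
    | 3 => exact h₃
    | s + 4 =>
      by_contra! ⟨h_zero, h_zero'⟩
      have h_pred : w (s + 3) ≠ 0 := (ih (s + 3) (by omega) (by omega)).resolve_right (· h_zero)
      have hw₃ : w 3 = 0 := by simpa [h_zero, h_zero', h₁, h_pred] using h_four (s + 1)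
      have hw₂ : w 2 ≠ 0 := h₂.resolve_right (· hw₃)
      have hw₄ : w 4 ≠ 0 := h₃.resolve_left (· hw₃)
      match s with
      | 0 => exact hw₄ h_zero
      | t + 1 =>
        have h_three : w (t + 3) = 0 := by simpa [h_zero', hw₃, hw₂, hw₄] using h_five t
        have h_two : w (t + 2) = 0 := by
          simpa [h_zero, hw₃, hw₂, h_pred] using h_four (t + 1)
        exact (ih (t + 2) (by omega) (by omega)).elim (· h_two) (· h_three)

variable {F : Type*} [Field F] {W : Affine F} {x y : F}

lemma eval_Ψ₃_ne_zero_of_evalEval_ψ₂_eq_zero (h : W.Nonsingular x y)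
    (hψ : W.ψ₂.evalEval x y = 0) : W.Ψ₃.eval x ≠ 0 := by
  have hX : W.polynomialX.evalEval x y ≠ 0 := h.2.resolve_right (· hψ)
  rw [eval_Ψ₃_eq h.1, hψ]
  simpa using hX

lemma divisionValue_two_ne_zero_or_three_ne_zero (h : W.Nonsingular x y) :
    divisionValue W x y 2 ≠ 0 ∨ divisionValue W x y 3 ≠ 0 := by
  rw [divisionValue_two, divisionValue_three, or_iff_not_imp_left, not_not]
  exact eval_Ψ₃_ne_zero_of_evalEval_ψ₂_eq_zero h

lemma divisionValue_three_ne_zero_or_four_ne_zero (h : W.Nonsingular x y) :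
    divisionValue W x y 3 ≠ 0 ∨ divisionValue W x y 4 ≠ 0 := by
  rw [divisionValue_three, divisionValue_four, or_iff_not_imp_left, not_not, eval_preΨ₄_eq h.1]
  intro h₃
  have hψ : W.ψ₂.evalEval x y ≠ 0 := fun hψ ↦ eval_Ψ₃_ne_zero_of_evalEval_ψ₂_eq_zero h hψ h₃
  simpa [h₃] using hψ

end ConsecutiveZeros

section Reduction

variable {R K k : Type*} [CommRing R] [Field K] [DecidableEq K] [Field k] {W : WeierstrassCurve R}
  {V : Affine K} {f : R →+* K} {a b : R} (hf : Function.Injective f) (hV : W.map f = V)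
  (h : V.Nonsingular (f a) (f b)) (hP : ¬IsOfFinAddOrder (Affine.Point.some _ _ h))

include hf hV hP

lemma divisionValue_elliptic_of_injective {m k : ℕ} (hkm : k ≤ m) :
    divisionValue W a b (m + 1 + (k + 1)) * divisionValue W a b (m - k) =
      divisionValue W a b (m + 2) * divisionValue W a b m * divisionValue W a b (k + 1) ^ 2 -
        divisionValue W a b (k + 2) * divisionValue W a b k * divisionValue W a b (m + 1) ^ 2 := by
  subst hV
  apply hf
  simpa only [map_mul, map_sub, map_pow, map_divisionValue] using divisionValue_elliptic h hP hkm

lemma divisionValue_succ_mul_pred_of_injective {n : ℕ} {z : R}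
    (hz : xNsmul (.some _ _ h) (n + 1) = f z) :
    divisionValue W a b (n + 2) * divisionValue W a b n =
      divisionValue W a b (n + 1) ^ 2 * (a - z) := by
  subst hV
  apply hf
  simpa only [map_mul, map_sub, map_pow, map_divisionValue, hz] using
    divisionValue_succ_mul_pred h hP n

lemma map_divisionValue_ne_zero_or_succ_ne_zero {g : R →+* k}
    (hg : (W.map g).toAffine.Nonsingular (g a) (g b)) {n : ℕ} (hn : 0 < n) :
    g (divisionValue W a b n) ≠ 0 ∨ g (divisionValue W a b (n + 1)) ≠ 0 := by
  refine ne_zero_or_succ_ne_zero_of_somos (w := fun n ↦ g (divisionValue W a b n)) (fun i ↦ ?_)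
    (fun i ↦ ?_) ?_ ?_ ?_ hn
  · simpa using congrArg g
      (divisionValue_elliptic_of_injective hf hV h hP (show 1 ≤ i + 1 by omega))
  · simpa using congrArg g
      (divisionValue_elliptic_of_injective hf hV h hP (show 2 ≤ i + 2 by omega))
  · simp [divisionValue_one]
  · simpa only [map_divisionValue] using divisionValue_two_ne_zero_or_three_ne_zero hg
  · simpa only [map_divisionValue] using divisionValue_three_ne_zero_or_four_ne_zero hg

theorem map_divisionValue_ne_zero {g : R →+* k}
    (hg : (W.map g).toAffine.Nonsingular (g a) (g b)) {n : ℕ} (hn : 0 < n) {z : R}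
    (hz : xNsmul (.some _ _ h) n = f z) : g (divisionValue W a b n) ≠ 0 := by
  intro h_zero
  obtain ⟨n, rfl⟩ := Nat.exists_eq_add_one.mpr hn
  have h_adj := congrArg g (divisionValue_succ_mul_pred_of_injective hf hV h hP hz)
  rw [map_mul, map_mul, map_pow, h_zero, zero_pow two_ne_zero, zero_mul, mul_eq_zero] at h_adj
  rcases h_adj with h_succ | h_pred
  · exact (map_divisionValue_ne_zero_or_succ_ne_zero hf hV h hP hg hn).elim (· h_zero) (· h_succ)
  · rcases n.eq_zero_or_pos with rfl | hn'
    · simp [divisionValue_one] at h_zero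
    · exact (map_divisionValue_ne_zero_or_succ_ne_zero hf hV h hP hg hn').elim (· h_pred)
        (· h_zero)

end Reduction

section Homogeneity

/-- Half the weight of the `n`-th term of `preNormEDS' B c d` when `B, c, d` have weights
`12, 8, 12`. For `n = 0`, where that term vanishes, truncated subtraction gives `0`. -/
def preWeight (n : ℕ) : ℕ :=
  (n ^ 2 - if Even n then 4 else 1) / 2

lemma preWeight_two_mul_add_one (i : ℕ) : preWeight (2 * i + 1) = 2 * i * (i + 1) := by
  rw [preWeight, if_neg (Nat.not_even_two_mul_add_one i),
    show (2 * i + 1) ^ 2 = 2 * (2 * i * (i + 1)) + 1 by ring]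
  omega

lemma preWeight_two_mul_add_two (i : ℕ) : preWeight (2 * i + 2) = 2 * i * (i + 2) := by
  rw [preWeight, if_pos (by simp [parity_simps]),
    show (2 * i + 2) ^ 2 = 2 * (2 * i * (i + 2)) + 4 by ring]
  omega

variable {R : Type*} [CommRing R]

lemma preNormEDS'_mul_pow (t B c d : R) (n : ℕ) :
    preNormEDS' (t ^ 6 * B) (t ^ 4 * c) (t ^ 6 * d) n =
      t ^ preWeight n * preNormEDS' B c d n := by
  induction n using normEDSRec with
  | zero => simp
  | one => simp [preWeight]
  | two => simp [preWeight]
  | three => rw [preNormEDS'_three, preNormEDS'_three]; rfl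
  | four => rw [preNormEDS'_four, preNormEDS'_four]; rfl
  | even m ih₁ ih₂ ih₃ ih₄ ih₅ =>
    rw [preNormEDS'_even, preNormEDS'_even, ih₁, ih₂, ih₃, ih₄, ih₅,
      show 2 * (m + 3) = 2 * (m + 2) + 2 by ring, preWeight_two_mul_add_two]
    obtain ⟨i, rfl | rfl⟩ := m.even_or_odd'
    · rw [preWeight_two_mul_add_one i, preWeight_two_mul_add_two i,
        show 2 * i + 3 = 2 * (i + 1) + 1 by ring, show 2 * i + 4 = 2 * (i + 1) + 2 by ring,
        show 2 * i + 5 = 2 * (i + 2) + 1 by ring, preWeight_two_mul_add_one,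
        preWeight_two_mul_add_two, preWeight_two_mul_add_one]
      ring
    · rw [show 2 * i + 1 + 1 = 2 * i + 2 by ring, show 2 * i + 1 + 2 = 2 * (i + 1) + 1 by ring,
        show 2 * i + 1 + 3 = 2 * (i + 1) + 2 by ring, show 2 * i + 1 + 4 = 2 * (i + 2) + 1 by ring,
        show 2 * i + 1 + 5 = 2 * (i + 2) + 2 by ring]
      simp only [preWeight_two_mul_add_one, preWeight_two_mul_add_two]
      ring
  | odd m ih₁ ih₂ ih₃ ih₄ =>
    rw [preNormEDS'_odd, preNormEDS'_odd, ih₁, ih₂, ih₃, ih₄,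
      preWeight_two_mul_add_one]
    obtain ⟨i, rfl | rfl⟩ := m.even_or_odd'
    · rw [if_pos (even_two_mul i), if_pos (even_two_mul i),
        show 2 * i + 3 = 2 * (i + 1) + 1 by ring, show 2 * i + 4 = 2 * (i + 1) + 2 by ring]
      simp only [preWeight_two_mul_add_one, preWeight_two_mul_add_two, if_pos (even_two_mul i)]
      ring
    · rw [show 2 * i + 1 + 1 = 2 * i + 2 by ring, show 2 * i + 1 + 2 = 2 * (i + 1) + 1 by ring,
        show 2 * i + 1 + 3 = 2 * (i + 1) + 2 by ring, show 2 * i + 1 + 4 = 2 * (i + 2) + 1 by ring]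
      simp only [preWeight_two_mul_add_one, preWeight_two_mul_add_two,
        if_neg (Nat.not_even_two_mul_add_one i)]
      ring

end Homogeneity

lemma preNormEDS'_zero_two_mul_add_one_ne_zero {R : Type*} [CommRing R] [NoZeroDivisors R]
    {c d : R} (hc : c ≠ 0) (j : ℕ) : preNormEDS' 0 c d (2 * j + 1) ≠ 0 := by
  have : Nontrivial R := nontrivial_of_ne c 0 hc
  induction j using Nat.strong_induction_on with
  | h j ih =>
    match j with
    | 0 => simp
    | 1 => simpa using hc
    | m + 2 =>
      rw [preNormEDS'_odd]
      obtain ⟨i, rfl | rfl⟩ := m.even_or_odd'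
      · simpa using ⟨ih i (by omega), ih (i + 1) (by omega)⟩
      · simpa [add_assoc, mul_add] using ⟨ih (i + 2) (by omega), ih (i + 1) (by omega)⟩

section OddDivisionPolynomials

variable {R : Type*} [CommRing R] {W : WeierstrassCurve R} {x y : R}

lemma eval_preΨ' (n : ℕ) :
    (W.preΨ' n).eval x =
      preNormEDS' (W.Ψ₂Sq.eval x ^ 2) (W.Ψ₃.eval x) (W.preΨ₄.eval x) n := by
  rw [preΨ', ← coe_evalRingHom, map_preNormEDS', map_pow]

lemma evalEval_ψ₂_sq (h : W.toAffine.Equation x y) :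
    W.ψ₂.evalEval x y ^ 2 = W.Ψ₂Sq.eval x := by
  have h_zero : W.toAffine.polynomial.evalEval x y = 0 := h
  rw [← evalEval_pow, ψ₂_sq, evalEval_add, evalEval_mul, h_zero, mul_zero, add_zero, evalEval_C]

lemma divisionValue_two_mul_add_one (h : W.toAffine.Equation x y) (j : ℕ) :
    divisionValue W x y (2 * j + 1) = (W.preΨ' (2 * j + 1)).eval x := by
  rw [divisionValue, WeierstrassCurve.ψ, normEDS_ofNat, if_neg (Nat.not_even_two_mul_add_one j),
    mul_one, ← coe_evalEvalRingHom, map_preNormEDS', eval_preΨ', ← evalEval_ψ₂_sq h, map_pow,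
    ← pow_mul]
  simp only [coe_evalEvalRingHom, evalEval_C]

lemma eval_preΨ'_ne_zero_of_evalEval_ψ₂_eq_zero {F : Type*} [Field F] {W : Affine F} {x y : F}
    (h : W.Nonsingular x y) (hψ : W.ψ₂.evalEval x y = 0) (j : ℕ) :
    (W.preΨ' (2 * j + 1)).eval x ≠ 0 := by
  rw [eval_preΨ', ← evalEval_ψ₂_sq h.1, hψ, zero_pow two_ne_zero, zero_pow two_ne_zero]
  exact preNormEDS'_zero_two_mul_add_one_ne_zero (eval_Ψ₃_ne_zero_of_evalEval_ψ₂_eq_zero h hψ) j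

lemma eval_preΨ'_mul {V : WeierstrassCurve R} {t : R} (h₂ : V.b₂ = t * W.b₂)
    (h₄ : V.b₄ = t ^ 2 * W.b₄) (h₆ : V.b₆ = t ^ 3 * W.b₆) (h₈ : V.b₈ = t ^ 4 * W.b₈) (n : ℕ) :
    (V.preΨ' n).eval (t * x) = t ^ preWeight n * (W.preΨ' n).eval x := by
  have hΨ₂Sq : V.Ψ₂Sq.eval (t * x) ^ 2 = t ^ 6 * W.Ψ₂Sq.eval x ^ 2 := by
    simp only [Ψ₂Sq, h₂, h₄, h₆, map_mul, map_pow, eval_add, eval_mul, eval_C, eval_pow, eval_X]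
    ring
  have hΨ₃ : V.Ψ₃.eval (t * x) = t ^ 4 * W.Ψ₃.eval x := by
    simp only [Ψ₃, h₂, h₄, h₆, h₈, map_mul, map_pow, eval_add, eval_mul, eval_ofNat, eval_pow,
      eval_X, eval_C]
    ring
  have hpreΨ₄ : V.preΨ₄.eval (t * x) = t ^ 6 * W.preΨ₄.eval x := by
    simp only [preΨ₄, h₂, h₄, h₆, h₈, map_mul, map_pow, map_sub, eval_add, eval_mul, eval_ofNat,
      eval_pow, eval_X, eval_C, eval_sub]
    ring
  rw [eval_preΨ', eval_preΨ', hΨ₂Sq, hΨ₃, hpreΨ₄, preNormEDS'_mul_pow]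

end OddDivisionPolynomials

section CongruentCurve

lemma map_congruentCurveZ (N : ℕ) :
    (congruentCurveZ N).map (Int.castRingHom ℚ) = congruentCurve N := by
  ext <;> simp [congruentCurveZ, congruentCurve]

lemma equation_map_congruentCurveZ {R : Type*} [CommRing R] {N : ℕ} {x y : R} :
    ((congruentCurveZ N).map (Int.castRingHom R)).toAffine.Equation x y ↔
      y ^ 2 = x ^ 3 - (N : R) ^ 2 * x := by
  rw [Affine.equation_iff]
  simp [congruentCurveZ, sub_eq_add_neg]

lemma nonsingular_map_congruentCurveZ {F : Type*} [Field F] (h_two : (2 : F) ≠ 0) {N : ℕ} {x y : F}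
    (h : y ^ 2 = x ^ 3 - (N : F) ^ 2 * x) (hxN : x ≠ 0 ∨ (N : F) ≠ 0) :
    ((congruentCurveZ N).map (Int.castRingHom F)).toAffine.Nonsingular x y := by
  rw [Affine.nonsingular_iff', equation_map_congruentCurveZ]
  refine ⟨h, ?_⟩
  by_contra! ⟨hX, hY⟩
  have hy : y = 0 := by simpa [congruentCurveZ, h_two] using hY
  have hN : (N : F) ^ 2 = 3 * x ^ 2 := by
    rw [← sub_eq_zero, ← hX]
    simp only [congruentCurveZ, map_a₁, map_a₂, map_a₄, eq_intCast, Int.cast_zero, Int.cast_neg,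
      Int.cast_pow, Int.cast_natCast]
    ring
  have hx : x = 0 := by
    have : 2 * x ^ 3 = 0 := by
      rw [hy, hN] at h
      linear_combination h
    simpa [h_two] using this
  have hN' : (N : F) = 0 := by simpa [hx] using hN
  exact hxN.elim (· hx) (· hN')

lemma psiEN_neg (N : ℕ) (a b n : ℤ) : psiEN N a b (-n) = -psiEN N a b n := by
  rw [psiEN, psiEN, Ψ_neg, evalEval_neg]

lemma psiEN_two_mul_add_one (N : ℕ) (a b : ℤ) (j : ℕ) :
    psiEN N a b (2 * j + 1 : ℕ) = ((congruentCurveZ N).preΨ' (2 * j + 1)).eval a := by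
  rw [psiEN, Ψ_ofNat, if_neg (Nat.not_even_two_mul_add_one j), mul_one, evalEval_C]

lemma eval_preΨ'_congruentCurveZ_mul (t N : ℕ) (x : ℤ) (n : ℕ) :
    ((congruentCurveZ (t * N)).preΨ' n).eval (t * x) =
      t ^ preWeight n * ((congruentCurveZ N).preΨ' n).eval x := by
  apply eval_preΨ'_mul
  all_goals
    simp only [congruentCurveZ, b₂, b₄, b₆, b₈]
    push_cast
    ring

end CongruentCurve

lemma dvd_of_sq_eq_pow_three_mul {R : Type*} [CommMonoidWithZero R] [IsCancelMulZero R]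
    {p b c : R} (hp : Prime p) (h : b ^ 2 = p ^ 3 * c) : p ∣ c := by
  obtain ⟨b₁, rfl⟩ : p ∣ b := hp.dvd_of_dvd_pow (h ▸ (dvd_pow_self p three_ne_zero).mul_right c)
  have h₁ : b₁ ^ 2 = p * c := by
    refine mul_left_cancel₀ (pow_ne_zero 2 hp.ne_zero) ?_
    rw [← mul_pow, h, pow_succ, mul_assoc]
  obtain ⟨b₂, rfl⟩ : p ∣ b₁ := hp.dvd_of_dvd_pow (h₁ ▸ dvd_mul_right p c)
  refine ⟨b₂ ^ 2, mul_left_cancel₀ hp.ne_zero ?_⟩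
  rw [← h₁, mul_pow, sq, mul_assoc]

section Valuation

variable {l : ℕ} [Fact l.Prime] (hl : l ≠ 2)

include hl

lemma not_dvd_psiEN {N : ℕ} {a b : ℤ} {h : (congruentCurve N).Nonsingular (a : ℚ) (b : ℚ)}
    (hP : ¬IsOfFinAddOrder (Affine.Point.some _ _ h)) (haN : ¬((l : ℤ) ∣ a ∧ l ∣ N)) {j : ℕ}
    {z : ℤ} (hz : xNsmul (.some _ _ h) (2 * j + 1) = z) :
    ¬(l : ℤ) ∣ psiEN N a b (2 * j + 1 : ℕ) := by
  have h_eq : (congruentCurveZ N).toAffine.Equation a b := by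
    rw [← map_congruentCurveZ] at h
    exact (Affine.map_equation _ (RingHom.injective_int (Int.castRingHom ℚ)) ..).mp h.1
  have hg : ((congruentCurveZ N).map (Int.castRingHom (ZMod l))).toAffine.Nonsingular
      (Int.castRingHom (ZMod l) a) (Int.castRingHom (ZMod l) b) := by
    refine nonsingular_map_congruentCurveZ (Ring.two_ne_zero (by rwa [ZMod.ringChar_zmod_n]))
      (equation_map_congruentCurveZ.mp (h_eq.map _)) ?_
    rwa [eq_intCast, ne_eq, ne_eq, ZMod.intCast_zmod_eq_zero_iff_dvd, ZMod.natCast_eq_zero_iff,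
      ← not_and_or]
  rw [psiEN_two_mul_add_one, ← divisionValue_two_mul_add_one h_eq,
    ← ZMod.intCast_zmod_eq_zero_iff_dvd]
  exact map_divisionValue_ne_zero (RingHom.injective_int (Int.castRingHom ℚ))
    (map_congruentCurveZ N) h hP hg (2 * j).succ_pos hz

lemma not_dvd_eval_preΨ' {M : ℕ} {a : ℤ} (hM : ¬l ∣ M) (ha : (l : ℤ) ∣ a ^ 3 - (M : ℤ) ^ 2 * a)
    (j : ℕ) : ¬(l : ℤ) ∣ ((congruentCurveZ M).preΨ' (2 * j + 1)).eval a := by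
  set V := (congruentCurveZ M).map (Int.castRingHom (ZMod l)) with hV
  have h : V.toAffine.Nonsingular (a : ZMod l) 0 := by
    refine nonsingular_map_congruentCurveZ (Ring.two_ne_zero (by rwa [ZMod.ringChar_zmod_n])) ?_
      (.inr (by rwa [ne_eq, ZMod.natCast_eq_zero_iff]))
    rw [← ZMod.intCast_zmod_eq_zero_iff_dvd] at ha
    simpa using ha.symm
  have hψ : V.ψ₂.evalEval (a : ZMod l) 0 = 0 := by
    rw [evalEval_ψ₂]
    simp [hV, congruentCurveZ]
  rw [← ZMod.intCast_zmod_eq_zero_iff_dvd, ← eq_intCast (Int.castRingHom _), ← eval₂_at_apply,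
    ← eval_map, ← map_preΨ']
  exact eval_preΨ'_ne_zero_of_evalEval_ψ₂_eq_zero h hψ j

lemma padicValInt_psiEN_mul {M : ℕ} {a b : ℤ} (hM : ¬l ∣ M)
    (h : b ^ 2 = (l * a) ^ 3 - ((l * M : ℕ) : ℤ) ^ 2 * (l * a)) (j : ℕ) :
    padicValInt l (psiEN (l * M) (l * a) b (2 * j + 1 : ℕ)) = 2 * j * (j + 1) := by
  have hl' : Prime (l : ℤ) := Nat.prime_iff_prime_int.mp Fact.out
  have ha : (l : ℤ) ∣ a ^ 3 - (M : ℤ) ^ 2 * a :=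
    dvd_of_sq_eq_pow_three_mul hl' (b := b) (by rw [h]; push_cast; ring)
  have h_psi := eval_preΨ'_congruentCurveZ_mul l M a (2 * j + 1)
  have h_unit := not_dvd_eval_preΨ' hl hM ha j
  rw [psiEN_two_mul_add_one, h_psi, preWeight_two_mul_add_one,
    padicValInt.mul (pow_ne_zero _ hl'.ne_zero) (fun h ↦ h_unit (by simp [h])),
    padicValInt.eq_zero_of_not_dvd h_unit, add_zero, padicValInt, Int.natAbs_pow,
    Int.natAbs_natCast, padicValNat.prime_pow]

lemma padicValInt_psiEN {N : ℕ} (hN : ¬l * l ∣ N) {a b : ℤ}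
    {h : (congruentCurve N).Nonsingular (a : ℚ) (b : ℚ)}
    (hP : ¬IsOfFinAddOrder (Affine.Point.some _ _ h)) {j : ℕ} {z : ℤ}
    (hz : xNsmul (.some _ _ h) (2 * j + 1) = z) :
    padicValInt l (psiEN N a b (2 * j + 1 : ℕ)) =
      2 * j * (j + 1) * padicValNat l (Int.gcd a N) := by
  by_cases haN : (l : ℤ) ∣ a ∧ l ∣ N
  · obtain ⟨⟨a, rfl⟩, M, rfl⟩ := haN
    have hM : ¬l ∣ M := fun hM ↦ hN (mul_dvd_mul_left l hM)
    have h_gcd : padicValNat l (Int.gcd (l * a) (l * M : ℕ)) = 1 := by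
      have h_unit : ¬l ∣ Int.gcd a M := fun h ↦ hM (h.trans (Int.gcd_dvd_natAbs_right a M))
      rw [Nat.cast_mul, Int.gcd_mul_left, Int.natAbs_natCast,
        padicValNat.mul (NeZero.ne l) (fun h ↦ h_unit (by simp [h])), padicValNat_self,
        padicValNat.eq_zero_of_not_dvd h_unit]
    have h_eq := equation_map_congruentCurveZ.mp (map_congruentCurveZ _ ▸ h.1)
    rw [h_gcd, mul_one]
    exact padicValInt_psiEN_mul hl hM (by exact_mod_cast h_eq) j
  · have h_gcd : ¬l ∣ Int.gcd a N := by
      rwa [← Int.natCast_dvd_natCast, Int.dvd_coe_gcd_iff, Int.natCast_dvd_natCast]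
    rw [padicValInt.eq_zero_of_not_dvd (not_dvd_psiEN hl hP haN hz),
      padicValNat.eq_zero_of_not_dvd h_gcd, mul_zero]

end Valuation

lemma IsIntegralPoint.exists_xNsmul_natAbs_eq {W : Affine ℚ} {P : W.Point} {n : ℤ}
    (h : IsIntegralPoint (n • P)) : ∃ z : ℤ, xNsmul P n.natAbs = z := by
  obtain ⟨x, y, hxy, h_eq, hx⟩ := h
  refine ⟨x.num, ?_⟩
  have h_rep : (n.natAbs • P).xRep = (n • P).xRep := by
    rcases n.natAbs_eq with hn | hn
    · rw [← natCast_zsmul, ← hn]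
    · rw [← Affine.Point.xRep_neg, ← natCast_zsmul, ← neg_zsmul, ← hn]
  rw [xNsmul, h_rep, h_eq, Affine.Point.xRep_some, Matrix.cons_val_zero,
    (Rat.den_eq_one_iff x).mp hx]

lemma padicValInt_psiEN_natAbs (l N : ℕ) (a b n : ℤ) :
    padicValInt l (psiEN N a b n.natAbs) = padicValInt l (psiEN N a b n) := by
  rcases n.natAbs_eq with hn | hn
  · rw [← hn]
  · conv_rhs => rw [hn, psiEN_neg, padicValInt, Int.natAbs_neg, ← padicValInt]

lemma not_isOfFinAddOrder_of_zsmul_ne_zero {G : Type*} [AddGroup G] {g : G}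
    (h : ∀ m : ℤ, 1 ≤ m → m • g ≠ 0) : ¬IsOfFinAddOrder g := by
  rw [isOfFinAddOrder_iff_nsmul_eq_zero]
  rintro ⟨m, hm, h_zero⟩
  exact h m (by exact_mod_cast hm) (natCast_zsmul g m ▸ h_zero)

theorem stmt7_general {N : ℕ} {a b : ℤ} {h : (congruentCurve N).Nonsingular (a : ℚ) (b : ℚ)}
    (hP : ¬IsOfFinAddOrder (Affine.Point.some _ _ h)) {n : ℤ} (hn : Odd n)
    (hint : IsIntegralPoint (n • (Affine.Point.some _ _ h))) {l : ℕ} (hl : l.Prime) (hl₂ : l ≠ 2)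
    (hN : ¬l * l ∣ N) :
    (padicValInt l (psiEN N a b n) : ℤ) =
      ((n ^ 2 - 1) / 2) * (padicValNat l (Int.gcd a (N : ℤ)) : ℤ) := by
  have : Fact l.Prime := ⟨hl⟩
  obtain ⟨j, hj⟩ := hn.natAbs
  obtain ⟨z, hz⟩ := hint.exists_xNsmul_natAbs_eq
  have h_half : (n ^ 2 - 1) / 2 = 2 * j * (j + 1) := by
    have : n ^ 2 - 1 = 2 * (2 * j * (j + 1)) := by
      rw [← Int.natAbs_sq, hj]
      push_cast
      ring
    rw [this, Int.mul_ediv_cancel_left _ two_ne_zero]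
  rw [← padicValInt_psiEN_natAbs, h_half, hj, padicValInt_psiEN hl₂ hN hP (hj ▸ hz)]
  push_cast
  rfl

theorem stmt7 (N : ℕ) (hN : 0 < N) (hsq : Squarefree N)
    (a b : ℤ) (h : (congruentCurve N).Nonsingular (a : ℚ) (b : ℚ))
    (hPtors : ∀ m : ℤ, 1 ≤ m →
      m • (WeierstrassCurve.Affine.Point.some _ _ h) ≠ 0)
    (n : ℤ) (hn : 3 ≤ n) (hnodd : Odd n)
    (hint : IsIntegralPoint (n • (WeierstrassCurve.Affine.Point.some _ _ h)))
    (l : ℕ) (hl : l.Prime) (hl2n : ¬ ((l : ℤ) ∣ 2 * n)) :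
    (padicValInt l (psiEN N a b n) : ℤ) =
      ((n ^ 2 - 1) / 2) * (padicValNat l (Int.gcd a (N : ℤ)) : ℤ) :=
  stmt7_general (not_isOfFinAddOrder_of_zsmul_ne_zero hPtors) hnodd hint hl
    (fun h ↦ hl2n (h ▸ dvd_mul_right 2 n)) (Nat.squarefree_iff_prime_squarefree.mp hsq l hl)
end

section
/- Let N be a positive squarefree integer, let P be a non-torsion integral point of E_N(ℚ), and let n ≥ 2 be an integer such that nP is integral. Then n is prime. -/
/-
Write `n = 2k` or, for `n` odd and composite, `n = ab` with `3 ≤ b ≤ a`. If `2R` is integral for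
some point `R`, then `x - N`, `x` and `x + N` are integer squares for `x = x(2R)`; modulo `4` this
forces `4 ∣ N`. So let `n = ab`. The kernel of reduction at each prime is a subgroup, so `aP` is
integral together with `abP`. For odd `m` the points `P` and `mP` differ by a double, so
`x(P) x(mP)` and `(x(P) - N) (x(mP) - N)` are squares; if `mP` is integral then, as `N` is
squarefree, the denominator of `x(mP) / N` divides that of `x(P) / N`.

Let `H(R)` be the odd part of `u² + w²`, where `x(R) / N = u / w` in lowest terms. Up to bounded
errors `log H` is quadratic, and Tate's limit gives `H(P) ^ n² ≤ 2 H(nP)`. Hence `x(aP) / N`, whose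
denominator is bounded, is so large that at the real place `aP` is very close to the origin. The
`x`-coordinates of the multiples of `aP` up to `abP` then decrease, so `0 < x(abP) < x(aP)`, and the
bounds on the denominators make `H(abP)` smaller than `H(aP) ^ b² / 2`.
-/

section TateLimit

open Filter Topology

variable {G : Type*} [AddCommGroup G] {f : G → ℝ} {C D : ℝ}

/-- A naive height on an abelian group: a function that is quadratic up to bounded errors. The
multiplication-by-two inequality is required to be exact from below, which makes Tate's sequence
`f (2 ^ k • x) / 4 ^ k` increasing. -/
structure IsNaiveHeight (f : G → ℝ) (C D : ℝ) : Prop where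
  four_mul_le_two_nsmul : ∀ x, 4 * f x ≤ f (2 • x)
  two_nsmul_le : ∀ x, f (2 • x) ≤ 4 * f x + 3 * C
  add_add_sub_le : ∀ x y, f (x + y) + f (x - y) ≤ 2 * f x + 2 * f y + D

/-- Tate's canonical height attached to a naive height `f`, that is, the limit of the sequence
`f (2 ^ k • x) / 4 ^ k`, written as a supremum because that sequence is increasing. -/
noncomputable def canonicalHeight (f : G → ℝ) (x : G) : ℝ :=
  ⨆ k : ℕ, f (2 ^ k • x) / 4 ^ k

namespace IsNaiveHeight

lemma monotone_div_four_pow (hf : IsNaiveHeight f C D) (x : G) :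
    Monotone fun k : ℕ ↦ f (2 ^ k • x) / 4 ^ k := by
  refine monotone_nat_of_le_succ fun k ↦ ?_
  have h := hf.four_mul_le_two_nsmul (2 ^ k • x)
  rw [pow_succ' 4 k, pow_succ' 2 k, mul_smul, ← div_div]
  gcongr
  linarith

lemma antitone_add_div_four_pow (hf : IsNaiveHeight f C D) (x : G) :
    Antitone fun k : ℕ ↦ (f (2 ^ k • x) + C) / 4 ^ k := by
  refine antitone_nat_of_succ_le fun k ↦ ?_
  have h := hf.two_nsmul_le (2 ^ k • x)
  rw [pow_succ' 4 k, pow_succ' 2 k, mul_smul, ← div_div]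
  gcongr
  linarith

lemma div_four_pow_le (hf : IsNaiveHeight f C D) (x : G) (k : ℕ) :
    f (2 ^ k • x) / 4 ^ k ≤ f x + C := by
  have hC : 0 ≤ C := by linarith [hf.four_mul_le_two_nsmul x, hf.two_nsmul_le x]
  calc f (2 ^ k • x) / 4 ^ k ≤ (f (2 ^ k • x) + C) / 4 ^ k := by gcongr; linarith
    _ ≤ (f (2 ^ 0 • x) + C) / 4 ^ 0 := hf.antitone_add_div_four_pow x k.zero_le
    _ = f x + C := by simp

lemma bddAbove_div_four_pow (hf : IsNaiveHeight f C D) (x : G) :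
    BddAbove (Set.range fun k : ℕ ↦ f (2 ^ k • x) / 4 ^ k) :=
  ⟨f x + C, Set.forall_mem_range.2 (hf.div_four_pow_le x)⟩

lemma tendsto_canonicalHeight (hf : IsNaiveHeight f C D) (x : G) :
    Tendsto (fun k : ℕ ↦ f (2 ^ k • x) / 4 ^ k) atTop (𝓝 (canonicalHeight f x)) :=
  tendsto_atTop_ciSup (hf.monotone_div_four_pow x) (hf.bddAbove_div_four_pow x)

lemma le_canonicalHeight (hf : IsNaiveHeight f C D) (x : G) : f x ≤ canonicalHeight f x := by
  simpa [canonicalHeight] using le_ciSup (hf.bddAbove_div_four_pow x) 0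

lemma canonicalHeight_le (hf : IsNaiveHeight f C D) (x : G) : canonicalHeight f x ≤ f x + C :=
  ciSup_le (hf.div_four_pow_le x)

lemma canonicalHeight_two_nsmul (hf : IsNaiveHeight f C D) (x : G) :
    canonicalHeight f (2 • x) = 4 * canonicalHeight f x := by
  have h := ((tendsto_add_atTop_iff_nat 1).2 (hf.tendsto_canonicalHeight x)).const_mul 4
  refine tendsto_nhds_unique (hf.tendsto_canonicalHeight (2 • x)) (h.congr fun k ↦ ?_)
  rw [← mul_smul, ← pow_succ, pow_succ' 4 k]
  field_simp

lemma canonicalHeight_add_add_sub_le (hf : IsNaiveHeight f C D) (x y : G) :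
    canonicalHeight f (x + y) + canonicalHeight f (x - y) ≤
      2 * canonicalHeight f x + 2 * canonicalHeight f y := by
  have hD : Tendsto (fun k : ℕ ↦ D / 4 ^ k) atTop (𝓝 0) :=
    tendsto_const_nhds.div_atTop (tendsto_pow_atTop_atTop_of_one_lt (by norm_num))
  have hl := (hf.tendsto_canonicalHeight (x + y)).add (hf.tendsto_canonicalHeight (x - y))
  have hr := (((hf.tendsto_canonicalHeight x).const_mul 2).add
    ((hf.tendsto_canonicalHeight y).const_mul 2)).add hD
  rw [add_zero] at hr
  refine le_of_tendsto_of_tendsto' hl hr fun k ↦ ?_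
  have h := hf.add_add_sub_le (2 ^ k • x) (2 ^ k • y)
  rw [smul_add, smul_sub, ← add_div, mul_div_assoc', mul_div_assoc', ← add_div, ← add_div]
  gcongr

lemma canonicalHeight_parallelogram (hf : IsNaiveHeight f C D) (x y : G) :
    canonicalHeight f (x + y) + canonicalHeight f (x - y) =
      2 * canonicalHeight f x + 2 * canonicalHeight f y := by
  refine le_antisymm (hf.canonicalHeight_add_add_sub_le x y) ?_
  have h := hf.canonicalHeight_add_add_sub_le (x + y) (x - y)
  rw [show x + y + (x - y) = 2 • x by abel, show x + y - (x - y) = 2 • y by abel,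
    hf.canonicalHeight_two_nsmul, hf.canonicalHeight_two_nsmul] at h
  linarith

lemma canonicalHeight_nsmul (hf : IsNaiveHeight f C D) (x : G) (n : ℕ) :
    canonicalHeight f (n • x) = n ^ 2 * canonicalHeight f x := by
  induction n using Nat.twoStepInduction with
  | zero =>
    have h := hf.canonicalHeight_two_nsmul 0
    rw [smul_zero] at h
    simp only [zero_smul, Nat.cast_zero]
    linarith
  | one => simp
  | more n ih ih' =>
    have h := hf.canonicalHeight_parallelogram ((n + 1) • x) x
    rw [show (n + 1) • x + x = (n + 2) • x by module, show (n + 1) • x - x = n • x by module,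
      ih, ih'] at h
    push_cast at h ⊢
    linarith

theorem sq_mul_le_nsmul_add (hf : IsNaiveHeight f C D) (x : G) (n : ℕ) :
    n ^ 2 * f x ≤ f (n • x) + C :=
  calc n ^ 2 * f x ≤ n ^ 2 * canonicalHeight f x := by gcongr; exact hf.le_canonicalHeight x
    _ = canonicalHeight f (n • x) := (hf.canonicalHeight_nsmul x n).symm
    _ ≤ f (n • x) + C := hf.canonicalHeight_le _

end IsNaiveHeight

end TateLimit

/-- On `y² = x³ - c²x`, the relation between the `x`-coordinates `x₁, x₂, x₃, x₄` of four points
`P, Q, P + Q, P - Q` with `x₁ ≠ x₂`: it fixes the sum and the product of `x₃` and `x₄`. -/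
structure SumDiffRel {R : Type*} [CommRing R] (c x₁ x₂ x₃ x₄ : R) : Prop where
  add : (x₃ + x₄) * (x₁ - x₂) ^ 2 = 2 * (x₁ + x₂) * (x₁ * x₂ - c ^ 2)
  mul : x₃ * x₄ * (x₁ - x₂) ^ 2 = (x₁ * x₂ + c ^ 2) ^ 2

/-- On `y² = x³ - c²x`, the relation between the `x`-coordinates `x` and `x₂` of `P` and `2P`. -/
def DoubleRel {R : Type*} [CommRing R] (c x x₂ : R) : Prop :=
  x₂ * (4 * (x * (x ^ 2 - c ^ 2))) = (x ^ 2 + c ^ 2) ^ 2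

section Field

variable {F : Type*} [Field F] {c x₁ x₂ x₃ x₄ : F}

lemma SumDiffRel.div (h : SumDiffRel c x₁ x₂ x₃ x₄) (hc : c ≠ 0) :
    SumDiffRel 1 (x₁ / c) (x₂ / c) (x₃ / c) (x₄ / c) where
  add := by field_simp; linear_combination h.add
  mul := by field_simp; linear_combination h.mul

lemma DoubleRel.div (h : DoubleRel c x₁ x₂) (hc : c ≠ 0) : DoubleRel 1 (x₁ / c) (x₂ / c) := by
  rw [DoubleRel] at *
  field_simp
  linear_combination h

end Field

section RationalHeight

/-- The naive height `u² + w²` of the rational number `u / w` in lowest terms. -/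
def sqHeight (t : ℚ) : ℤ := t.num ^ 2 + t.den ^ 2

/-- The odd part of `sqHeight t`. Dropping the factor `2` removes the only cancellation in the
duplication formula, so that `oddHeight` grows at least like a fourth power under duplication. -/
def oddHeight (t : ℚ) : ℤ :=
  if Odd t.num ∧ Odd (t.den : ℤ) then sqHeight t / 2 else sqHeight t

lemma sqHeight_pos (t : ℚ) : 0 < sqHeight t := by
  have := t.den_pos
  unfold sqHeight
  positivity

lemma odd_sqHeight {t : ℚ} (h : ¬(Odd t.num ∧ Odd (t.den : ℤ))) : Odd (sqHeight t) := by
  have hne : ¬(Even t.num ∧ Even (t.den : ℤ)) := fun ⟨hu, hw⟩ ↦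
    Int.prime_two.not_isUnit (t.isCoprime_num_den.isUnit_of_dvd' hu.two_dvd hw.two_dvd)
  rw [sqHeight, Int.odd_add, Int.odd_pow, Int.even_pow]
  simp only [← Int.not_even_iff_odd] at *
  tauto

lemma sqHeight_eq_mul_oddHeight (t : ℚ) :
    ∃ g : ℤ, (g = 1 ∨ g = 2) ∧ sqHeight t = g * oddHeight t ∧ Odd (oddHeight t) := by
  by_cases h : Odd t.num ∧ Odd (t.den : ℤ)
  · obtain ⟨⟨r, hr⟩, ⟨s, hs⟩⟩ := h
    have hH : sqHeight t = 2 * (2 * (r ^ 2 + r + s ^ 2 + s) + 1) := by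
      rw [sqHeight, hr, hs]; ring
    have ho : oddHeight t = 2 * (r ^ 2 + r + s ^ 2 + s) + 1 := by
      rw [oddHeight, if_pos ⟨⟨r, hr⟩, ⟨s, hs⟩⟩, hH, Int.mul_ediv_cancel_left _ two_ne_zero]
    exact ⟨2, .inr rfl, by rw [hH, ho], ho ▸ ⟨_, rfl⟩⟩
  · have ho : oddHeight t = sqHeight t := if_neg h
    exact ⟨1, .inl rfl, by rw [ho, one_mul], ho ▸ odd_sqHeight h⟩

lemma odd_oddHeight (t : ℚ) : Odd (oddHeight t) :=
  let ⟨_, _, _, h⟩ := sqHeight_eq_mul_oddHeight t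
  h

lemma oddHeight_eq_sqHeight {t : ℚ} (h : Odd (sqHeight t)) : oddHeight t = sqHeight t := by
  obtain ⟨g, rfl | rfl, hg, -⟩ := sqHeight_eq_mul_oddHeight t
  · rw [hg, one_mul]
  · exact absurd (hg ▸ h) (Int.not_odd_iff_even.2 (even_two_mul _))

lemma oddHeight_pos (t : ℚ) : 0 < oddHeight t := by
  obtain ⟨g, rfl | rfl, hg, -⟩ := sqHeight_eq_mul_oddHeight t <;> linarith [sqHeight_pos t]

lemma oddHeight_le_sqHeight (t : ℚ) : oddHeight t ≤ sqHeight t := by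
  obtain ⟨g, rfl | rfl, hg, -⟩ := sqHeight_eq_mul_oddHeight t <;> linarith [oddHeight_pos t]

lemma sqHeight_le_two_mul_oddHeight (t : ℚ) : sqHeight t ≤ 2 * oddHeight t := by
  obtain ⟨g, rfl | rfl, hg, -⟩ := sqHeight_eq_mul_oddHeight t <;> linarith [oddHeight_pos t]

lemma oddHeight_eq_one {t : ℚ} (h : t * (t ^ 2 - 1) = 0) : oddHeight t = 1 := by
  rcases mul_eq_zero.1 h with rfl | h
  · rfl
  · rcases sq_eq_one_iff.1 (sub_eq_zero.1 h) with rfl | rfl <;> rfl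

lemma five_le_oddHeight {t : ℚ} (h : t * (t ^ 2 - 1) ≠ 0) : 5 ≤ oddHeight t := by
  have hnum : t.num ^ 2 ≠ 0 := by
    rintro h0
    simp_all
  have hden : t.num ^ 2 ≠ (t.den : ℤ) ^ 2 := by
    intro h0
    have h0' : (t.num : ℚ) ^ 2 = t.den ^ 2 := by exact_mod_cast h0
    have ht : t ^ 2 = 1 := by rw [← t.num_div_den, div_pow, h0', div_self (by simp)]
    simp [ht] at h
  have hpos := t.den_pos
  obtain ⟨g, hg, hH, ho⟩ := sqHeight_eq_mul_oddHeight t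
  rw [sqHeight] at hH
  by_contra! hlt
  have hle : t.num ^ 2 + (t.den : ℤ) ^ 2 ≤ 6 := by
    obtain ⟨k, hk⟩ := ho
    rcases hg with rfl | rfl <;> omega
  have hu : |t.num| < 3 := abs_lt_of_sq_lt_sq (by nlinarith) (by norm_num)
  have hw : t.den < 3 := by nlinarith
  have hfive : t.num ^ 2 + (t.den : ℤ) ^ 2 = 5 := by
    obtain ⟨hl, hr⟩ := abs_lt.1 hu
    clear hH h
    generalize t.num = u, t.den = w at *
    interval_cases u <;> interval_cases w <;> simp_all
  rcases hg with rfl | rfl <;> omega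

lemma sqHeight_eq_of_isCoprime {t : ℚ} {a b : ℤ} (hb : b ≠ 0) (hab : IsCoprime a b)
    (h : t * b = a) : sqHeight t = a ^ 2 + b ^ 2 := by
  have hcross : t.num * b = t.den * a := by
    have : (t.num * b : ℚ) = t.den * a := by rw [← t.mul_den_eq_num, ← h]; ring
    exact_mod_cast this
  have hdvd : (t.den : ℤ) ∣ b :=
    t.isCoprime_num_den.symm.dvd_of_dvd_mul_left ⟨a, hcross⟩
  have hdvd' : b ∣ t.den := hab.symm.dvd_of_dvd_mul_right ⟨t.num, by rw [← hcross, mul_comm]⟩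
  have hden : (t.den : ℤ) ^ 2 = b ^ 2 :=
    Int.natAbs_eq_iff_sq_eq.1 (Int.natAbs_eq_of_dvd_dvd hdvd hdvd')
  have hnum : t.num ^ 2 = a ^ 2 := by
    refine mul_right_cancel₀ (pow_ne_zero 2 hb) ?_
    rw [← mul_pow, hcross, mul_pow, hden, mul_comm]
  rw [sqHeight, hnum, hden]

lemma isCoprime_of_dvd_sq_add_sq {u w c : ℤ} (h : IsCoprime u w) (hc : Odd c)
    (hd : c ∣ u ^ 2 + w ^ 2) : IsCoprime c (4 * (u * w * (u ^ 2 - w ^ 2))) := by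
  have hc2 : IsCoprime c 2 := Int.isCoprime_two_right.2 hc
  have hcu : IsCoprime c u := by
    refine .of_isCoprime_of_dvd_left ?_ hd
    rw [sq u]
    exact (h.symm.pow_left (m := 2)).mul_add_left_left u
  have hcw : IsCoprime c w := by
    refine .of_isCoprime_of_dvd_left ?_ hd
    rw [sq w]
    exact (h.pow_left (m := 2)).add_mul_left_left w
  have hcd : IsCoprime c (u ^ 2 - w ^ 2) := by
    obtain ⟨k, hk⟩ := hd
    rw [show u ^ 2 - w ^ 2 = 2 * u ^ 2 + c * (-k) by linarith]
    exact (hc2.mul_right hcu.pow_right).add_mul_left_right (-k)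
  exact (hc2.pow_right (n := 2)).mul_right ((hcu.mul_right hcw).mul_right hcd)

lemma exists_even_sq_mul_eq (t : ℚ) : ∃ g D : ℤ, g ≠ 0 ∧ sqHeight t = g * oddHeight t ∧
    g ^ 2 * D = 4 * (t.num * t.den * (t.num ^ 2 - t.den ^ 2)) ∧ Even D := by
  obtain ⟨g, rfl | rfl, hg, -⟩ := sqHeight_eq_mul_oddHeight t
  · exact ⟨1, _, one_ne_zero, hg, one_mul _, by norm_num [Int.even_mul]⟩
  · refine ⟨2, t.num * t.den * (t.num ^ 2 - t.den ^ 2), two_ne_zero, hg, by ring, ?_⟩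
    simp only [Int.even_mul, Int.even_sub, Int.even_pow]
    tauto

lemma DoubleRel.exists_sqHeight_eq {t t₂ : ℚ} (h : DoubleRel 1 t t₂) (ht : t * (t ^ 2 - 1) ≠ 0) :
    ∃ D : ℤ, sqHeight t₂ = oddHeight t ^ 4 + D ^ 2 ∧ Even D ∧ D ^ 2 ≤ oddHeight t ^ 4 := by
  obtain ⟨g, D, hg0, hg, hD, hDe⟩ := exists_even_sq_mul_eq t
  have hH : t.num ^ 2 + (t.den : ℤ) ^ 2 = g * oddHeight t := hg
  have hgℚ : (g : ℚ) ^ 2 ≠ 0 := by positivity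
  have hDℚ : (g : ℚ) ^ 2 * D = 4 * (t * (t ^ 2 - 1)) * t.den ^ 4 := by
    have : (g : ℚ) ^ 2 * D = 4 * (t.num * t.den * (t.num ^ 2 - t.den ^ 2)) := by exact_mod_cast hD
    rw [this, ← t.mul_den_eq_num]; ring
  have hHℚ : (g : ℚ) * oddHeight t = (t ^ 2 + 1) * t.den ^ 2 := by
    have : (t.num : ℚ) ^ 2 + t.den ^ 2 = g * oddHeight t := by exact_mod_cast hH
    rw [← this, ← t.mul_den_eq_num]; ring
  have hD0 : D ≠ 0 := by
    rintro rfl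
    simp_all
  have hcop : IsCoprime (oddHeight t ^ 2) D :=
    ((isCoprime_of_dvd_sq_add_sq t.isCoprime_num_den (odd_oddHeight t)
      (hH ▸ Dvd.intro_left g rfl)).of_isCoprime_of_dvd_right (hD ▸ Dvd.intro_left _ rfl)).pow_left
  have heq : t₂ * D = (oddHeight t ^ 2 : ℤ) := by
    refine mul_left_cancel₀ hgℚ ?_
    rw [DoubleRel] at h
    push_cast
    linear_combination t₂ * hDℚ + t.den ^ 4 * h -
      (g * oddHeight t + (t ^ 2 + 1) * t.den ^ 2) * hHℚ
  refine ⟨D, by rw [sqHeight_eq_of_isCoprime hD0 hcop heq]; ring, hDe, ?_⟩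
  refine le_of_mul_le_mul_left ?_ (show 0 < g ^ 4 by positivity)
  calc g ^ 4 * D ^ 2 = (4 * (t.num * t.den * (t.num ^ 2 - t.den ^ 2))) ^ 2 := by rw [← hD]; ring
    _ ≤ (t.num ^ 2 + t.den ^ 2) ^ 4 := by
      linarith [sq_nonneg ((t.num ^ 2 - 2 * t.num * t.den - (t.den : ℤ) ^ 2) *
        (t.num ^ 2 + 2 * t.num * t.den - (t.den : ℤ) ^ 2))]
    _ = g ^ 4 * oddHeight t ^ 4 := by rw [hH, mul_pow]

lemma DoubleRel.oddHeight_pow_le {t t₂ : ℚ} (h : DoubleRel 1 t t₂) (ht : t * (t ^ 2 - 1) ≠ 0) :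
    oddHeight t ^ 4 ≤ oddHeight t₂ := by
  obtain ⟨D, hD, hDe, -⟩ := h.exists_sqHeight_eq ht
  have hodd : Odd (sqHeight t₂) :=
    hD ▸ (odd_oddHeight t).pow.add_even (hDe.pow_of_ne_zero two_ne_zero)
  rw [oddHeight_eq_sqHeight hodd, hD]
  exact le_add_of_nonneg_right (sq_nonneg D)

lemma DoubleRel.oddHeight_le {t t₂ : ℚ} (h : DoubleRel 1 t t₂) (ht : t * (t ^ 2 - 1) ≠ 0) :
    oddHeight t₂ ≤ 2 * oddHeight t ^ 4 := by
  obtain ⟨D, hD, -, hle⟩ := h.exists_sqHeight_eq ht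
  linarith [oddHeight_le_sqHeight t₂]

lemma exists_combination_of_isCoprime {R : Type*} [CommRing R] {u w u' w' : R}
    (h : IsCoprime u w) (h' : IsCoprime u' w') :
    ∃ a b c : R, a * (w * w') + b * (u * w' + u' * w) + c * (u * u') = 1 := by
  obtain ⟨a, b, hab⟩ := h
  obtain ⟨a', b', hab'⟩ := h'
  have hprod : (a * u + b * w) * (a' * u' + b' * w') = 1 := by rw [hab, hab', one_mul]
  -- Up to a combination of the required shape, `hprod` reads `δ * (u * w') = 1` where
  -- `δ = a * b' - a' * b`. Multiplying it by `1 + δ * (u * w')` turns `u * w'` into its square, and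
  -- `(u * w') ^ 2 = u * w' * (u * w' + u' * w) - u * u' * (w * w')`.
  refine ⟨b * b' * (1 + (a * b' - a' * b) * (u * w')) - (a * b' - a' * b) ^ 2 * (u * u'),
    a' * b * (1 + (a * b' - a' * b) * (u * w')) + (a * b' - a' * b) ^ 2 * (u * w'),
    a * a' * (1 + (a * b' - a' * b) * (u * w')), ?_⟩
  linear_combination (1 + (a * b' - a' * b) * (u * w')) * hprod

lemma exists_common_multiplier {R : Type*} [CommRing R] [IsDomain R] {a b c p q r A B C : R}
    (hcomb : a * p + b * q + c * r = 1) (hp : p ≠ 0) (hq : A * q = B * p) (hr : A * r = C * p) :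
    ∃ e, A = e * p ∧ B = e * q ∧ C = e * r := by
  have hA : A = (a * A + b * B + c * C) * p := by
    linear_combination (-A) * hcomb + b * hq + c * hr
  refine ⟨_, hA, mul_right_cancel₀ hp ?_, mul_right_cancel₀ hp ?_⟩
  · linear_combination q * hA - hq
  · linear_combination r * hA - hr

lemma SumDiffRel.exists_num_den {t₁ t₂ t₃ t₄ : ℚ} (h : SumDiffRel 1 t₁ t₂ t₃ t₄) (hne : t₁ ≠ t₂) :
    ∃ e : ℤ, e ≠ 0 ∧ (t₁.num * t₂.den - t₂.num * t₁.den) ^ 2 = e * (t₃.den * t₄.den) ∧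
      2 * (t₁.num * t₂.den + t₂.num * t₁.den) * (t₁.num * t₂.num - t₁.den * t₂.den) =
        e * (t₃.num * t₄.den + t₄.num * t₃.den) ∧
      (t₁.num * t₂.num + t₁.den * t₂.den) ^ 2 = e * (t₃.num * t₄.num) := by
  obtain ⟨a, b, c, hcomb⟩ :=
    exists_combination_of_isCoprime t₃.isCoprime_num_den t₄.isCoprime_num_den
  have hp : (t₃.den * t₄.den : ℤ) ≠ 0 := by simp
  obtain ⟨e, hA, hB, hC⟩ := exists_common_multiplier hcomb hp
    (A := (t₁.num * t₂.den - t₂.num * t₁.den) ^ 2)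
    (B := 2 * (t₁.num * t₂.den + t₂.num * t₁.den) * (t₁.num * t₂.num - t₁.den * t₂.den))
    (C := (t₁.num * t₂.num + t₁.den * t₂.den) ^ 2)
    (by
      qify
      simp only [← Rat.mul_den_eq_num]
      linear_combination t₁.den ^ 2 * t₂.den ^ 2 * t₃.den * t₄.den * h.add)
    (by
      qify
      simp only [← Rat.mul_den_eq_num]
      linear_combination t₁.den ^ 2 * t₂.den ^ 2 * t₃.den * t₄.den * h.mul)
  refine ⟨e, ?_, hA, hB, hC⟩
  rintro rfl
  rw [zero_mul, sq_eq_zero_iff, sub_eq_zero] at hA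
  exact hne (Rat.eq_iff_mul_eq_mul.2 hA)

lemma SumDiffRel.sqHeight_mul_sqHeight_le {t₁ t₂ t₃ t₄ : ℚ} (h : SumDiffRel 1 t₁ t₂ t₃ t₄)
    (hne : t₁ ≠ t₂) :
    sqHeight t₃ * sqHeight t₄ ≤ 2 * (sqHeight t₁ * sqHeight t₂) ^ 2 := by
  obtain ⟨e, he, hA, hB, hC⟩ := h.exists_num_den hne
  unfold sqHeight
  generalize t₁.num = u₁, t₂.num = u₂, t₃.num = u₃, t₄.num = u₄, (t₁.den : ℤ) = w₁,
    (t₂.den : ℤ) = w₂, (t₃.den : ℤ) = w₃, (t₄.den : ℤ) = w₄ at *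
  have he2 : 1 ≤ e ^ 2 := Int.add_one_le_of_lt (sq_pos_of_ne_zero he)
  calc (u₃ ^ 2 + w₃ ^ 2) * (u₄ ^ 2 + w₄ ^ 2)
      ≤ e ^ 2 * ((u₃ ^ 2 + w₃ ^ 2) * (u₄ ^ 2 + w₄ ^ 2)) :=
        le_mul_of_one_le_left (by positivity) he2
    _ = (e * (w₃ * w₄) - e * (u₃ * u₄)) ^ 2 + (e * (u₃ * w₄ + u₄ * w₃)) ^ 2 := by ring
    _ = ((u₁ * w₂ - u₂ * w₁) ^ 2 - (u₁ * u₂ + w₁ * w₂) ^ 2) ^ 2 +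
        (2 * (u₁ * w₂ + u₂ * w₁) * (u₁ * u₂ - w₁ * w₂)) ^ 2 := by rw [hA, hB, hC]
    _ ≤ 2 * ((u₁ ^ 2 + w₁ ^ 2) * (u₂ ^ 2 + w₂ ^ 2)) ^ 2 := by
      linarith [sq_nonneg ((u₁ * w₂ - u₂ * w₁) * (u₁ * u₂ + w₁ * w₂)),
        sq_nonneg ((u₁ * w₂ + u₂ * w₁) ^ 2 - (u₁ * u₂ - w₁ * w₂) ^ 2)]

lemma SumDiffRel.oddHeight_mul_oddHeight_le {t₁ t₂ t₃ t₄ : ℚ} (h : SumDiffRel 1 t₁ t₂ t₃ t₄)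
    (hne : t₁ ≠ t₂) :
    oddHeight t₃ * oddHeight t₄ ≤ 32 * (oddHeight t₁ * oddHeight t₂) ^ 2 := by
  have h₁ := sqHeight_pos t₁
  have h₂ := sqHeight_pos t₂
  calc oddHeight t₃ * oddHeight t₄ ≤ sqHeight t₃ * sqHeight t₄ :=
        mul_le_mul (oddHeight_le_sqHeight t₃) (oddHeight_le_sqHeight t₄) (oddHeight_pos t₄).le
          (sqHeight_pos t₃).le
    _ ≤ 2 * (sqHeight t₁ * sqHeight t₂) ^ 2 := h.sqHeight_mul_sqHeight_le hne
    _ ≤ 2 * (2 * oddHeight t₁ * (2 * oddHeight t₂)) ^ 2 := by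
        gcongr
        exacts [h₁.le.trans (sqHeight_le_two_mul_oddHeight t₁), sqHeight_le_two_mul_oddHeight t₁,
          sqHeight_le_two_mul_oddHeight t₂]
    _ = 32 * (oddHeight t₁ * oddHeight t₂) ^ 2 := by ring

end RationalHeight

namespace congruentCurve

open WeierstrassCurve.Affine (slope_of_X_ne slope_of_Y_ne equation_iff)
open WeierstrassCurve.Affine.Point (neg_some add_of_X_ne add_self_of_Y_eq add_self_of_Y_ne X_eq_iff)

variable {N : ℕ} {P Q : (congruentCurve N).Point}

lemma equation {x y : ℚ} (h : (congruentCurve N).Nonsingular x y) :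
    y ^ 2 = x ^ 3 - (N : ℚ) ^ 2 * x := by
  have := (equation_iff _ _).1 h.1
  simp only [congruentCurve] at this
  linarith

/-- The `x`-coordinate of a point of `E_N`. The point at infinity gets the junk value `0`, which
has the smallest possible height and no prime in its denominator. -/
def xCoord : (congruentCurve N).Point → ℚ
  | .zero => 0
  | .some x _ _ => x

@[simp]
lemma xCoord_zero : xCoord (0 : (congruentCurve N).Point) = 0 := rfl

@[simp]
lemma xCoord_neg (P : (congruentCurve N).Point) : xCoord (-P) = xCoord P := by
  cases P <;> rfl

lemma eq_or_eq_neg_of_xCoord_eq (hP : P ≠ 0) (hQ : Q ≠ 0) (h : xCoord P = xCoord Q) :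
    P = Q ∨ P = -Q := by
  rcases P with _ | ⟨x, y, hp⟩
  · exact absurd rfl hP
  rcases Q with _ | ⟨x', y', hq⟩
  · exact absurd rfl hQ
  exact (X_eq_iff (h₁ := hp) (h₂ := hq)).1 h

lemma sumDiffRel (hP : P ≠ 0) (hQ : Q ≠ 0) (h : xCoord P ≠ xCoord Q) :
    SumDiffRel (N : ℚ) (xCoord P) (xCoord Q) (xCoord (P + Q)) (xCoord (P - Q)) := by
  rcases P with _ | ⟨x, y, hp⟩
  · exact absurd rfl hP
  rcases Q with _ | ⟨x', y', hq⟩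
  · exact absurd rfl hQ
  have h : x ≠ x' := h
  have hx : x - x' ≠ 0 := sub_ne_zero.2 h
  have hy := equation hp
  have hy' := equation hq
  have hadd : xCoord (.some x y hp + .some x' y' hq) =
      (x * x' * (x + x') - (N : ℚ) ^ 2 * (x + x') - 2 * (y * y')) / (x - x') ^ 2 := by
    rw [add_of_X_ne h]
    simp only [xCoord, WeierstrassCurve.Affine.addX, slope_of_X_ne h]
    simp only [congruentCurve]
    field_simp
    linear_combination hy + hy'
  have hsub : xCoord (.some x y hp - .some x' y' hq) =
      (x * x' * (x + x') - (N : ℚ) ^ 2 * (x + x') + 2 * (y * y')) / (x - x') ^ 2 := by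
    rw [sub_eq_add_neg, neg_some, add_of_X_ne h]
    simp only [xCoord, WeierstrassCurve.Affine.addX, slope_of_X_ne h, WeierstrassCurve.Affine.negY]
    simp only [congruentCurve]
    field_simp
    linear_combination hy + hy'
  constructor <;> rw [hadd, hsub] <;> simp only [xCoord] <;> field_simp
  · ring
  · linear_combination (-4) * x' * (x' ^ 2 - N ^ 2) * hy - 4 * y ^ 2 * hy'

lemma exists_xCoord_two_nsmul (h : 2 • P ≠ 0) : ∃ y : ℚ, y ≠ 0 ∧
    y ^ 2 = xCoord P * (xCoord P ^ 2 - (N : ℚ) ^ 2) ∧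
    xCoord (2 • P) = ((xCoord P ^ 2 + (N : ℚ) ^ 2) / (2 * y)) ^ 2 := by
  rcases P with _ | ⟨x, y, hp⟩
  · exact absurd (nsmul_zero 2) h
  rw [two_nsmul] at *
  have hne : y ≠ (congruentCurve N).negY x y := fun hy ↦ h (add_self_of_Y_eq hy)
  have hneg : (congruentCurve N).negY x y = -y := by
    simp [WeierstrassCurve.Affine.negY, congruentCurve]
  have hy0 : y ≠ 0 := by
    rintro rfl
    exact hne (by rw [hneg, neg_zero])
  have hy := equation hp
  refine ⟨y, hy0, by rw [hy, xCoord]; ring, ?_⟩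
  rw [add_self_of_Y_ne hne]
  simp only [xCoord, WeierstrassCurve.Affine.addX, slope_of_Y_ne rfl hne, hneg]
  simp only [congruentCurve, sub_neg_eq_add, ← two_mul]
  field_simp
  linear_combination (-8) * x * hy

lemma mul_xCoord_eq_zero_of_two_nsmul (h : 2 • P = 0) :
    xCoord P * (xCoord P ^ 2 - (N : ℚ) ^ 2) = 0 := by
  rcases P with _ | ⟨x, y, hp⟩
  · exact zero_mul _
  have hneg : y = (congruentCurve N).negY x y := by
    by_contra hne
    rw [two_nsmul, add_self_of_Y_ne hne] at h
    cases h
  have hy : y = 0 := by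
    simp only [WeierstrassCurve.Affine.negY, congruentCurve, zero_mul, sub_zero] at hneg
    linarith
  have := equation hp
  rw [hy] at this
  rw [xCoord]
  linear_combination -this

lemma mul_xCoord_pos (h : 2 • P ≠ 0) : 0 < xCoord P * (xCoord P ^ 2 - (N : ℚ) ^ 2) := by
  obtain ⟨y, hy0, hy, -⟩ := exists_xCoord_two_nsmul h
  rw [← hy]
  positivity

lemma doubleRel (h : 2 • P ≠ 0) : DoubleRel (N : ℚ) (xCoord P) (xCoord (2 • P)) := by
  obtain ⟨y, hy0, hy, h2⟩ := exists_xCoord_two_nsmul h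
  rw [DoubleRel, ← hy, h2]
  field_simp
  ring

/-- The `x`-coordinate scaled by `N`, that is, the `x`-coordinate of the corresponding point of the
twist `Ny² = x³ - x`. -/
def normX (P : (congruentCurve N).Point) : ℚ := xCoord P / N

@[simp]
lemma normX_zero : normX (0 : (congruentCurve N).Point) = 0 := by simp [normX]

@[simp]
lemma normX_neg (P : (congruentCurve N).Point) : normX (-P) = normX P := by simp [normX]

section NeZero

variable [NeZero N]

lemma sumDiffRel_normX (hP : P ≠ 0) (hQ : Q ≠ 0) (h : normX P ≠ normX Q) :
    SumDiffRel 1 (normX P) (normX Q) (normX (P + Q)) (normX (P - Q)) :=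
  (sumDiffRel hP hQ (ne_of_apply_ne (· / (N : ℚ)) h)).div (NeZero.ne _)

lemma doubleRel_normX (h : 2 • P ≠ 0) : DoubleRel 1 (normX P) (normX (2 • P)) :=
  (doubleRel h).div (NeZero.ne _)

lemma mul_normX_eq (P : (congruentCurve N).Point) :
    normX P * (normX P ^ 2 - 1) = xCoord P * (xCoord P ^ 2 - (N : ℚ) ^ 2) / N ^ 3 := by
  have : (N : ℚ) ≠ 0 := NeZero.ne _
  rw [normX]
  field_simp

lemma mul_normX_pos (h : 2 • P ≠ 0) : 0 < normX P * (normX P ^ 2 - 1) := by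
  have : 0 < N := NeZero.pos N
  rw [mul_normX_eq]
  exact div_pos (mul_xCoord_pos h) (by positivity)

lemma mul_normX_eq_zero (h : 2 • P = 0) : normX P * (normX P ^ 2 - 1) = 0 := by
  rw [mul_normX_eq, mul_xCoord_eq_zero_of_two_nsmul h, zero_div]

lemma oddHeight_pow_le_two_nsmul (P : (congruentCurve N).Point) :
    oddHeight (normX P) ^ 4 ≤ oddHeight (normX (2 • P)) := by
  by_cases h : 2 • P = 0
  · rw [oddHeight_eq_one (mul_normX_eq_zero h), one_pow]
    exact oddHeight_pos _
  · exact (doubleRel_normX h).oddHeight_pow_le (mul_normX_pos h).ne'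

lemma oddHeight_two_nsmul_le (P : (congruentCurve N).Point) :
    oddHeight (normX (2 • P)) ≤ 2 * oddHeight (normX P) ^ 4 := by
  by_cases h : 2 • P = 0
  · rw [h, oddHeight_eq_one (mul_normX_eq_zero h), normX_zero]
    decide
  · exact (doubleRel_normX h).oddHeight_le (mul_normX_pos h).ne'

lemma oddHeight_add_mul_oddHeight_sub_le (P Q : (congruentCurve N).Point) :
    oddHeight (normX (P + Q)) * oddHeight (normX (P - Q)) ≤
      32 * (oddHeight (normX P) * oddHeight (normX Q)) ^ 2 := by
  have h0 : oddHeight (normX (0 : (congruentCurve N).Point)) = 1 := by rw [normX_zero]; rfl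
  have hpos (R : (congruentCurve N).Point) := oddHeight_pos (normX R)
  by_cases hP : P = 0
  · simp only [hP, zero_add, zero_sub, normX_neg, h0, one_mul]
    nlinarith [hpos Q]
  by_cases hQ : Q = 0
  · simp only [hQ, add_zero, sub_zero, h0, mul_one]
    nlinarith [hpos P]
  by_cases hne : normX P = normX Q
  · have hx : xCoord P = xCoord Q := (div_left_inj' (NeZero.ne (N : ℚ))).1 hne
    have hpow : 0 < oddHeight (normX Q) ^ 4 := pow_pos (hpos Q) 4
    have h2 := oddHeight_two_nsmul_le Q
    rcases eq_or_eq_neg_of_xCoord_eq hP hQ hx with rfl | rfl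
    · rw [sub_self, h0, ← two_nsmul]
      linarith
    · rw [neg_add_cancel, h0, ← neg_add', normX_neg, normX_neg, ← two_nsmul]
      linarith
  · exact (sumDiffRel_normX hP hQ hne).oddHeight_mul_oddHeight_le hne

lemma isNaiveHeight_log_oddHeight : IsNaiveHeight
    (fun P : (congruentCurve N).Point ↦ Real.log (oddHeight (normX P)))
    (Real.log 2) (Real.log 32) where
  four_mul_le_two_nsmul P := by
    have hP : (0 : ℝ) < oddHeight (normX P) := by exact_mod_cast oddHeight_pos _
    rw [← Nat.cast_ofNat (R := ℝ), ← Real.log_pow]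
    exact Real.log_le_log (by positivity) (by exact_mod_cast oddHeight_pow_le_two_nsmul P)
  two_nsmul_le P := by
    have hP : (0 : ℝ) < oddHeight (normX P) := by exact_mod_cast oddHeight_pos _
    have h2P : (0 : ℝ) < oddHeight (normX (2 • P)) := by exact_mod_cast oddHeight_pos _
    calc Real.log (oddHeight (normX (2 • P))) ≤ Real.log (2 * oddHeight (normX P) ^ 4) :=
          Real.log_le_log h2P (by exact_mod_cast oddHeight_two_nsmul_le P)
      _ = 4 * Real.log (oddHeight (normX P)) + Real.log 2 := by
          rw [Real.log_mul two_ne_zero (by positivity), Real.log_pow, add_comm]; norm_cast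
      _ ≤ 4 * Real.log (oddHeight (normX P)) + 3 * Real.log 2 := by
          linarith [Real.log_pos one_lt_two]
  add_add_sub_le P Q := by
    have hpos (R : (congruentCurve N).Point) : (0 : ℝ) < oddHeight (normX R) := by
      exact_mod_cast oddHeight_pos _
    have hP := hpos P
    have hQ := hpos Q
    calc Real.log (oddHeight (normX (P + Q))) + Real.log (oddHeight (normX (P - Q)))
        = Real.log (oddHeight (normX (P + Q)) * oddHeight (normX (P - Q))) :=
          (Real.log_mul (hpos _).ne' (hpos _).ne').symm
      _ ≤ Real.log (32 * (oddHeight (normX P) * oddHeight (normX Q)) ^ 2) :=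
          Real.log_le_log (mul_pos (hpos _) (hpos _))
            (by exact_mod_cast oddHeight_add_mul_oddHeight_sub_le P Q)
      _ = 2 * Real.log (oddHeight (normX P)) + 2 * Real.log (oddHeight (normX Q)) +
          Real.log 32 := by
          rw [Real.log_mul (by norm_num) (by positivity), Real.log_pow,
            Real.log_mul hP.ne' hQ.ne']
          push_cast
          ring

theorem oddHeight_pow_sq_le (P : (congruentCurve N).Point) (n : ℕ) :
    oddHeight (normX P) ^ n ^ 2 ≤ 2 * oddHeight (normX (n • P)) := by
  have hP : (0 : ℝ) < oddHeight (normX P) := by exact_mod_cast oddHeight_pos _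
  have hnP : (0 : ℝ) < oddHeight (normX (n • P)) := by exact_mod_cast oddHeight_pos _
  have h := isNaiveHeight_log_oddHeight.sq_mul_le_nsmul_add P n
  rw [← Real.log_mul hnP.ne' two_ne_zero, ← Nat.cast_pow, ← Real.log_pow,
    Real.log_le_log_iff (by positivity) (by positivity), mul_comm] at h
  exact_mod_cast h

end NeZero

end congruentCurve

section Valuation

variable {R Γ₀ : Type*} [CommRing R] [LinearOrderedCommGroupWithZero Γ₀] {v : Valuation R Γ₀}
  {c x₁ x₂ x₃ x₄ : R}

lemma valuation_two_le_one (v : Valuation R Γ₀) : v 2 ≤ 1 := by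
  rw [← one_add_one_eq_two]
  exact v.map_add_le v.map_one.le v.map_one.le

lemma DoubleRel.one_lt_valuation (h : DoubleRel c x₁ x₂) (hc : v c ≤ 1) (hx : 1 < v x₁) :
    1 < v x₂ := by
  have hcx : v (c ^ 2) < v (x₁ ^ 2) := by
    rw [map_pow, map_pow]
    exact (pow_le_one' hc 2).trans_lt (one_lt_pow' hx two_ne_zero)
  have h4 : v 4 ≤ 1 := by
    rw [show (4 : R) = 2 * 2 by norm_num, map_mul]
    exact mul_le_one' (valuation_two_le_one v) (valuation_two_le_one v)
  have hv : v x₂ * (v 4 * v x₁ ^ 3) = v x₁ ^ 4 := by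
    have := congrArg v h
    simp only [map_mul, map_pow, v.map_add_eq_of_lt_left hcx, v.map_sub_eq_of_lt_left hcx] at this
    rwa [← pow_succ', ← pow_mul] at this
  by_contra! hx₂
  refine hv.not_lt ?_
  calc v x₂ * (v 4 * v x₁ ^ 3) ≤ 1 * (1 * v x₁ ^ 3) := by gcongr
    _ = v x₁ ^ 3 := by simp only [one_mul]
    _ < v x₁ ^ 4 := pow_lt_pow_right₀ hx (by decide)

lemma SumDiffRel.one_lt_valuation (h : SumDiffRel c x₁ x₂ x₃ x₄) (hc : v c ≤ 1)
    (hx₁ : 1 < v x₁) (hx₂ : 1 < v x₂) : 1 < v x₃ := by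
  set m := max (v x₁) (v x₂)
  have hpos : 0 < v x₁ * v x₂ := zero_lt_one.trans (one_lt_mul'' hx₁ hx₂)
  have hm : m < v x₁ * v x₂ := max_lt (lt_mul_of_one_lt_right (zero_lt_one.trans hx₁) hx₂)
    (lt_mul_of_one_lt_left (zero_lt_one.trans hx₂) hx₁)
  have hcx : v (c ^ 2) < v (x₁ * x₂) := by
    rw [map_pow, map_mul]
    exact (pow_le_one' hc 2).trans_lt (one_lt_mul'' hx₁ hx₂)
  have hδ : v (x₁ - x₂) ≤ m := v.map_sub x₁ x₂
  have hmul : v x₃ * v x₄ * v (x₁ - x₂) ^ 2 = (v x₁ * v x₂) ^ 2 := by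
    simpa only [map_mul, map_pow, v.map_add_eq_of_lt_left hcx] using congrArg v h.mul
  have hadd : v (x₃ + x₄) * v (x₁ - x₂) ^ 2 ≤ m * (v x₁ * v x₂) := by
    have := congrArg v h.add
    simp only [map_mul, map_pow, v.map_sub_eq_of_lt_left hcx] at this
    rw [this]
    gcongr
    exact mul_le_of_le_one_of_le (valuation_two_le_one v) (v.map_add x₁ x₂)
  by_contra! hx₃
  have hx₄ : (v x₁ * v x₂) ^ 2 ≤ v x₄ * v (x₁ - x₂) ^ 2 := by
    rw [← hmul]
    gcongr
    exact mul_le_of_le_one_left' hx₃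
  have hlt : v x₃ < v x₄ := by
    refine hx₃.trans_lt (lt_of_not_ge fun hle ↦ hx₄.not_gt ?_)
    calc v x₄ * v (x₁ - x₂) ^ 2 ≤ 1 * m ^ 2 := by gcongr
      _ = m ^ 2 := one_mul _
      _ < (v x₁ * v x₂) ^ 2 := pow_lt_pow_left₀ hm zero_le two_ne_zero
  rw [v.map_add_eq_of_lt_right hlt] at hadd
  refine (hx₄.trans hadd).not_gt ?_
  rw [sq]
  gcongr

end Valuation

namespace congruentCurve

variable {N : ℕ}

/-- The kernel of reduction of `E_N` at a valuation `v` at which `N` is integral: the points that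
reduce to the point at infinity. -/
def reductionKernel {Γ₀ : Type*} [LinearOrderedCommGroupWithZero Γ₀] (v : Valuation ℚ Γ₀)
    (hN : v N ≤ 1) : AddSubgroup (congruentCurve N).Point where
  carrier := {P | P = 0 ∨ 1 < v (xCoord P)}
  zero_mem' := .inl rfl
  neg_mem' {P} hP := by simpa only [Set.mem_ofPred_eq, neg_eq_zero, xCoord_neg] using hP
  add_mem' {P Q} := by
    rintro (rfl | hP) (rfl | hQ)
    · exact .inl (add_zero 0)
    · exact .inr (by rwa [zero_add])
    · exact .inr (by rwa [add_zero])
    have ne_zero {R : (congruentCurve N).Point} (hR : 1 < v (xCoord R)) : R ≠ 0 := by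
      rintro rfl
      rw [xCoord_zero, map_zero] at hR
      exact hR.not_ge zero_le
    by_cases hx : xCoord P = xCoord Q
    · rcases eq_or_eq_neg_of_xCoord_eq (ne_zero hP) (ne_zero hQ) hx with rfl | rfl
      · rw [← two_nsmul]
        exact or_iff_not_imp_left.2 fun h ↦ (doubleRel h).one_lt_valuation hN hP
      · exact .inl (neg_add_cancel Q)
    · exact .inr ((sumDiffRel (ne_zero hP) (ne_zero hQ) hx).one_lt_valuation hN hP hQ)

lemma den_xCoord_eq_one_of_nsmul {P : (congruentCurve N).Point} {k : ℕ} (hk : k • P ≠ 0)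
    (h : (xCoord (k • P)).den = 1) : (xCoord P).den = 1 := by
  by_contra hP
  obtain ⟨p, hp, hdvd⟩ := Nat.exists_prime_and_dvd hP
  have : Fact p.Prime := ⟨hp⟩
  have hN : Rat.padicValuation p N ≤ 1 := by
    rw [Rat.padicValuation_le_one_iff, Rat.den_natCast]
    exact hp.not_dvd_one
  have hmem : P ∈ reductionKernel (Rat.padicValuation p) hN :=
    .inr (not_le.1 (Rat.padicValuation_le_one_iff.not_left.2 hdvd))
  refine ((nsmul_mem hmem k).resolve_left hk).not_ge ?_
  rw [Rat.padicValuation_le_one_iff, h]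
  exact hp.not_dvd_one

end congruentCurve

section TwoDescent

variable {F : Type*} [Field F] {c x₁ x₂ x₃ x₄ : F}

lemma SumDiffRel.isSquare_mul (h : SumDiffRel c x₁ x₂ x₃ x₄) (hne : x₁ ≠ x₂) :
    IsSquare (x₃ * x₄) := by
  have : x₁ - x₂ ≠ 0 := sub_ne_zero.2 hne
  refine ⟨(x₁ * x₂ + c ^ 2) / (x₁ - x₂), ?_⟩
  field_simp
  linear_combination h.mul

lemma SumDiffRel.isSquare_sub_mul_sub (h : SumDiffRel c x₁ x₂ x₃ x₄) (hne : x₁ ≠ x₂) :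
    IsSquare ((x₃ - c) * (x₄ - c)) := by
  have : x₁ - x₂ ≠ 0 := sub_ne_zero.2 hne
  refine ⟨(x₁ * x₂ - c * x₁ - c * x₂ - c ^ 2) / (x₁ - x₂), ?_⟩
  field_simp
  linear_combination h.mul - c * h.add

end TwoDescent

section Squarefree

lemma sq_dvd_of_isSquare_mul {R : Type*} [CommRing R] [IsDomain R] {p u v : R}
    (hp : Prime p) (h : IsSquare (u * v)) (hu : ¬p ∣ u) (hv : p ∣ v) : p ^ 2 ∣ v := by
  obtain ⟨w, hw⟩ := h
  have hpw : p ∣ w := by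
    have : p ∣ w * w := hw ▸ hv.mul_left u
    exact (hp.dvd_or_dvd this).elim id id
  refine hp.pow_dvd_of_dvd_mul_left 2 hu ?_
  rw [hw, sq]
  exact mul_dvd_mul hpw hpw

lemma prime_dvd_of_isSquare_mul {R : Type*} [CommRing R] [IsDomain R] {p n x z : R}
    (hp : Prime p) (hn : Squarefree n) (h₀ : IsSquare (z * x))
    (h₁ : IsSquare ((z - n) * (x - n))) (hpn : p ∣ n) (hpx : p ∣ x) : p ∣ z := by
  by_contra hpz
  have hx : p ^ 2 ∣ x := sq_dvd_of_isSquare_mul hp h₀ hpz hpx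
  have hxn : p ^ 2 ∣ x - n :=
    sq_dvd_of_isSquare_mul hp h₁ (fun h ↦ hpz ((dvd_sub_left hpn).1 h)) (dvd_sub hpx hpn)
  refine hp.not_isUnit (hn p ?_)
  rw [← sq]
  exact (dvd_sub_right hx).1 hxn

lemma dvd_of_squarefree_of_forall_prime {n m : ℕ} (hn : Squarefree n)
    (h : ∀ p : ℕ, p.Prime → p ∣ n → p ∣ m) : n ∣ m := by
  rw [← Nat.prod_primeFactors_of_squarefree hn]
  exact Finset.prod_primes_dvd m (fun p hp ↦ (Nat.prime_of_mem_primeFactors hp).prime)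
    fun p hp ↦ h p (Nat.prime_of_mem_primeFactors hp) (Nat.dvd_of_mem_primeFactors hp)

lemma dvd_mul_of_isSquare_mul {n : ℕ} {x z m : ℤ} (hn : Squarefree n) (h₀ : IsSquare (z * x))
    (h₁ : IsSquare ((z - n) * (x - n))) (h : (n : ℤ) ∣ x * m) : (n : ℤ) ∣ z * m := by
  rw [Int.natCast_dvd]
  refine dvd_of_squarefree_of_forall_prime hn fun p hp hpn ↦ Int.natCast_dvd.1 ?_
  have hp' : Prime (p : ℤ) := Nat.prime_iff_prime_int.1 hp
  have hpn' : (p : ℤ) ∣ n := Int.natCast_dvd_natCast.2 hpn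
  rcases hp'.dvd_or_dvd (hpn'.trans h) with hpx | hpm
  · exact (prime_dvd_of_isSquare_mul hp' (Int.squarefree_natCast.2 hn) h₀ h₁ hpn' hpx).mul_right m
  · exact hpm.mul_left z

lemma den_div_dvd_den_div {n x z : ℤ} (hn : n ≠ 0) (h : ∀ m, n ∣ x * m → n ∣ z * m) :
    (z / n : ℚ).den ∣ (x / n : ℚ).den := by
  have hn' : (n : ℚ) ≠ 0 := Int.cast_ne_zero.2 hn
  set q : ℚ := x / n with hq
  have hden : (q.den : ℚ) ≠ 0 := Nat.cast_ne_zero.2 q.den_nz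
  have hx : x * q.den = n * q.num := by
    have : (x : ℚ) * q.den = n * q.num := by
      rw [← Rat.mul_den_eq_num, hq]
      field_simp
    exact_mod_cast this
  obtain ⟨k, hk⟩ := h q.den ⟨q.num, hx⟩
  have hz : (z / n : ℚ) = (k : ℚ) / (q.den : ℤ) := by
    have : (z : ℚ) * q.den = n * k := by exact_mod_cast hk
    push_cast
    field_simp
    linarith
  rw [hz, ← Int.natCast_dvd_natCast, ← Rat.divInt_eq_div]
  exact Rat.den_dvd k q.den

lemma not_squarefree_of_isSquare {n : ℕ} {x : ℤ} (h₀ : IsSquare x) (h₁ : IsSquare (x - n))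
    (h₂ : IsSquare (x + n)) : ¬Squarefree n := by
  intro hn
  obtain ⟨a, ha⟩ := h₀
  obtain ⟨b, hb⟩ := h₁
  obtain ⟨c, hc⟩ := h₂
  have key : ∀ n x a b c : ZMod 4, x = a * a → x - n = b * b → x + n = c * c → n = 0 := by decide
  have h4 : (n : ZMod 4) = 0 := key n x a b c (by exact_mod_cast congrArg _ ha)
    (by exact_mod_cast congrArg (Int.cast (R := ZMod 4)) hb)
    (by exact_mod_cast congrArg (Int.cast (R := ZMod 4)) hc)
  have := hn 2 ((ZMod.natCast_eq_zero_iff n 4).1 h4)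
  exact absurd this (by decide)

end Squarefree

namespace congruentCurve

variable {N : ℕ} {P S : (congruentCurve N).Point}

lemma isSquare_mul_xCoord_add_two_nsmul (hP : P ≠ 0) (hQ : P + 2 • S ≠ 0) :
    IsSquare (xCoord (P + 2 • S) * xCoord P) ∧
      IsSquare ((xCoord (P + 2 • S) - N) * (xCoord P - N)) := by
  have hadd : P + 2 • S = P + S + S := by rw [two_nsmul, add_assoc]
  rw [hadd] at hQ ⊢
  by_cases hS : S = 0
  · simp only [hS, add_zero, IsSquare.mul_self, and_self]
  by_cases hPS : P + S = 0
  · rw [hPS, zero_add, eq_neg_of_add_eq_zero_left hPS, xCoord_neg]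
    exact ⟨.mul_self _, .mul_self _⟩
  have hne : xCoord (P + S) ≠ xCoord S := by
    intro h
    rcases eq_or_eq_neg_of_xCoord_eq hPS hS h with h | h
    · exact hP (add_eq_right.1 h)
    · exact hQ (by rw [h, neg_add_cancel])
  have hrel := sumDiffRel hPS hS hne
  rw [add_sub_cancel_right] at hrel
  exact ⟨hrel.isSquare_mul hne, hrel.isSquare_sub_mul_sub hne⟩

lemma isSquare_xCoord_two_nsmul (h : 2 • P ≠ 0) : IsSquare (xCoord (2 • P)) ∧
    IsSquare (xCoord (2 • P) - N) ∧ IsSquare (xCoord (2 • P) + N) := by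
  obtain ⟨y, hy0, hy, h2⟩ := exists_xCoord_two_nsmul h
  rw [h2]
  refine ⟨⟨_, sq _⟩, ⟨(xCoord P ^ 2 - 2 * N * xCoord P - N ^ 2) / (2 * y), ?_⟩,
    ⟨(xCoord P ^ 2 + 2 * N * xCoord P - N ^ 2) / (2 * y), ?_⟩⟩
  all_goals field_simp
  · linear_combination (-4) * N * hy
  · linear_combination 4 * N * hy

lemma den_xCoord_two_nsmul_ne_one (hN : Squarefree N) (h : 2 • P ≠ 0) :
    (xCoord (2 • P)).den ≠ 1 := by
  intro hden
  obtain ⟨h₀, h₁, h₂⟩ := isSquare_xCoord_two_nsmul h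
  rw [← Rat.coe_int_num_of_den_eq_one hden] at h₀ h₁ h₂
  exact not_squarefree_of_isSquare (Rat.isSquare_intCast_iff.1 h₀)
    (Rat.isSquare_intCast_iff.1 (by exact_mod_cast h₁))
    (Rat.isSquare_intCast_iff.1 (by exact_mod_cast h₂)) hN

lemma den_normX_add_two_nsmul_dvd (hN : Squarefree N) (hP : P ≠ 0) (hPd : (xCoord P).den = 1)
    (hQ : P + 2 • S ≠ 0) (hQd : (xCoord (P + 2 • S)).den = 1) :
    (normX (P + 2 • S)).den ∣ (normX P).den := by
  obtain ⟨h₀, h₁⟩ := isSquare_mul_xCoord_add_two_nsmul hP hQ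
  rw [normX, normX]
  rw [← Rat.coe_int_num_of_den_eq_one hPd, ← Rat.coe_int_num_of_den_eq_one hQd] at h₀ h₁ ⊢
  refine den_div_dvd_den_div (n := N) (Int.natCast_ne_zero.2 hN.ne_zero) fun m ↦ ?_
  exact dvd_mul_of_isSquare_mul hN (Rat.isSquare_intCast_iff.1 (by exact_mod_cast h₀))
    (Rat.isSquare_intCast_iff.1 (by exact_mod_cast h₁))

lemma den_normX_nsmul_dvd {k : ℕ} (hN : Squarefree N) (hk : Odd k) (hP : P ≠ 0)
    (hPd : (xCoord P).den = 1) (hkP : k • P ≠ 0) (hkPd : (xCoord (k • P)).den = 1) :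
    (normX (k • P)).den ∣ (normX P).den := by
  obtain ⟨j, rfl⟩ := hk
  have h : (2 * j + 1) • P = P + 2 • (j • P) := by
    rw [add_nsmul, one_nsmul, mul_nsmul', add_comm]
  rw [h] at hkP hkPd ⊢
  exact den_normX_add_two_nsmul_dvd hN hP hPd hkP hkPd

end congruentCurve

section RealDescent

variable {F : Type*} [Field F] [LinearOrder F] [IsStrictOrderedRing F] {a x α β : F}

lemma DoubleRel.lt_of_two_le (h : DoubleRel 1 a β) (ha : 2 ≤ a) : β < a := by
  have hsq : 4 ≤ a ^ 2 := by nlinarith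
  have hpos : 0 < 4 * (a * (a ^ 2 - 1 ^ 2)) := by
    have : 0 < a ^ 2 - 1 ^ 2 := by linarith
    positivity
  refine lt_of_mul_lt_mul_right ?_ hpos.le
  rw [h]
  nlinarith

lemma DoubleRel.div_four_le (h : DoubleRel 1 a β) (ha : 2 ≤ a) : a / 4 ≤ β := by
  have hsq : 4 ≤ a ^ 2 := by nlinarith
  have hpos : 0 < 4 * (a * (a ^ 2 - 1 ^ 2)) := by
    have : 0 < a ^ 2 - 1 ^ 2 := by linarith
    positivity
  refine le_of_mul_le_mul_right ?_ hpos
  rw [h]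
  nlinarith

lemma SumDiffRel.lt_of_two_le (h : SumDiffRel 1 x a β α) (hx : 2 ≤ x) (hxa : x < a)
    (hxα : x < α) : β < x := by
  -- The monic quadratic with roots `α` and `β` is negative at `x`.
  have hprod : (x - α) * (x - β) * (x - a) ^ 2 < 0 := by
    have hsq : 4 ≤ x ^ 2 := by nlinarith
    have hcube : 0 < x ^ 3 - x := by nlinarith
    calc (x - α) * (x - β) * (x - a) ^ 2 = (x ^ 2 + 1) ^ 2 - 4 * a * (x ^ 3 - x) := by
          linear_combination (-x) * h.add + h.mul
      _ < (x ^ 2 + 1) ^ 2 - 4 * x * (x ^ 3 - x) := by gcongr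
      _ ≤ 0 := by nlinarith
  by_contra! hβ
  refine hprod.not_ge (mul_nonneg (mul_nonneg_of_nonpos_of_nonpos ?_ ?_) (sq_nonneg _)) <;>
    linarith

lemma SumDiffRel.div_four_le (h : SumDiffRel 1 x a β α) (hx : 2 ≤ x) (hxa : x < a)
    (hxα : x < α) : x / 4 ≤ β := by
  have hxa₂ : 4 ≤ x * a := by nlinarith
  have hsq : 0 < (x - a) ^ 2 := sq_pos_of_ne_zero (sub_ne_zero.2 hxa.ne)
  have hα : 0 < α := by linarith
  have hβ : 0 < β := by
    have : 0 < β * α * (x - a) ^ 2 := by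
      rw [h.mul]
      positivity
    exact pos_of_mul_pos_left (pos_of_mul_pos_left this hsq.le) hα.le
  have hsum : x * (β + α) ≤ 4 * (β * α) := by
    refine le_of_mul_le_mul_right ?_ hsq
    calc x * (β + α) * (x - a) ^ 2 = 2 * (x * (x + a)) * (x * a - 1) := by
          linear_combination x * h.add
      _ ≤ 2 * (2 * (x * a)) * (x * a - 1) := by
          refine mul_le_mul_of_nonneg_right ?_ (by linarith)
          nlinarith
      _ ≤ 4 * (x * a + 1) ^ 2 := by nlinarith
      _ = 4 * (β * α) * (x - a) ^ 2 := by linear_combination (-4) * h.mul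
  have : x * α ≤ 4 * β * α := by nlinarith
  linarith [le_of_mul_le_mul_right this hα]

end RealDescent

namespace congruentCurve

variable {N : ℕ} [NeZero N]

lemma doubleRel_normX_of_two_le {R : (congruentCurve N).Point} (hR : 2 ≤ normX R) :
    DoubleRel 1 (normX R) (normX (2 • R)) := by
  refine doubleRel_normX fun h ↦ ?_
  have := mul_normX_eq_zero h
  nlinarith

lemma normX_descent {R : (congruentCurve N).Point} {b : ℕ} (hR : 2 * 4 ^ b ≤ normX R) {j : ℕ}
    (hj : j ≤ b) : normX ((j + 2) • R) < normX ((j + 1) • R) ∧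
      normX ((j + 1) • R) ≤ normX R ∧ normX R / 4 ^ (j + 1) ≤ normX ((j + 2) • R) := by
  have ne_zero {Q : (congruentCurve N).Point} (hQ : 2 ≤ normX Q) : Q ≠ 0 := by
    rintro rfl
    rw [normX_zero] at hQ
    linarith
  have hb : (1 : ℚ) ≤ 4 ^ b := one_le_pow₀ (by norm_num)
  have hR₂ : 2 ≤ normX R := by linarith
  induction j with
  | zero =>
    have h := doubleRel_normX_of_two_le hR₂
    simp only [zero_add, one_nsmul, pow_one, le_refl, true_and]
    exact ⟨h.lt_of_two_le hR₂, h.div_four_le hR₂⟩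
  | succ j ih =>
    obtain ⟨hlt, hle, hge⟩ := ih (by omega)
    have hx : 2 ≤ normX ((j + 2) • R) := by
      refine le_trans ?_ hge
      rw [le_div_iff₀ (by positivity)]
      refine le_trans ?_ hR
      gcongr
      norm_num
    have hrel := sumDiffRel_normX (ne_zero hx) (ne_zero hR₂) (hlt.trans_le hle).ne
    rw [← succ_nsmul, show (j + 2) • R - R = (j + 1) • R by rw [succ_nsmul, add_sub_cancel_right]]
      at hrel
    refine ⟨hrel.lt_of_two_le hx (hlt.trans_le hle) hlt, hlt.le.trans hle, ?_⟩
    calc normX R / 4 ^ (j + 1 + 1) = normX R / 4 ^ (j + 1) / 4 := by rw [pow_succ, div_div]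
      _ ≤ normX ((j + 2) • R) / 4 := by gcongr
      _ ≤ _ := hrel.div_four_le hx (hlt.trans_le hle) hlt

lemma normX_nsmul_mem_Ioo {R : (congruentCurve N).Point} {b : ℕ} (hb : 2 ≤ b)
    (hR : 2 * 4 ^ b ≤ normX R) : normX (b • R) ∈ Set.Ioo 0 (normX R) := by
  obtain ⟨j, rfl⟩ := Nat.exists_eq_add_of_le' hb
  obtain ⟨hlt, hle, hge⟩ := normX_descent hR (Nat.le_add_right j 2)
  have : 0 < normX R := lt_of_lt_of_le (by positivity) hR
  exact ⟨lt_of_lt_of_le (by positivity) hge, hlt.trans_le hle⟩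

end congruentCurve

section HeightComparison

variable {r s t : ℚ}

lemma den_sq_le_two_mul_oddHeight (t : ℚ) : (t.den : ℤ) ^ 2 ≤ 2 * oddHeight t :=
  (le_add_of_nonneg_left (sq_nonneg t.num)).trans (sqHeight_le_two_mul_oddHeight t)

lemma sqHeight_le_den_sq_mul_sqHeight (hr : 0 ≤ r) (hrs : r ≤ s) :
    sqHeight r ≤ (r.den : ℤ) ^ 2 * sqHeight s := by
  have hrd : 0 < (r.den : ℤ) := by exact_mod_cast r.den_pos
  have hsd : 1 ≤ (s.den : ℤ) := by exact_mod_cast s.den_pos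
  have hr₀ : 0 ≤ r.num := Rat.num_nonneg.2 hr
  have hnum : r.num ≤ r.den * s.num :=
    calc r.num ≤ r.num * s.den := le_mul_of_one_le_right hr₀ hsd
      _ ≤ s.num * r.den := (Rat.le_iff r s).1 hrs
      _ = r.den * s.num := mul_comm _ _
  calc sqHeight r ≤ (r.den * s.num) ^ 2 + (r.den * s.den) ^ 2 :=
        add_le_add (pow_le_pow_left₀ hr₀ hnum 2)
          (pow_le_pow_left₀ hrd.le (le_mul_of_one_le_right hrd.le hsd) 2)
    _ = (r.den : ℤ) ^ 2 * sqHeight s := by rw [sqHeight]; ring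

lemma le_abs_of_oddHeight_pow_le {b m : ℕ} (ht : 5 ≤ oddHeight t) (hden : s.den ≤ t.den)
    (hm : 2 * b + 3 ≤ m) (h : oddHeight t ^ m ≤ 2 * oddHeight s) : 2 * 4 ^ b ≤ |s| := by
  have hpow : oddHeight t * (25 * 16 ^ b) ≤ 2 * (s.num ^ 2 + s.den ^ 2) :=
    calc oddHeight t * (25 * 16 ^ b) ≤ oddHeight t * (25 * 25 ^ b) := by gcongr; norm_num
      _ = 5 ^ (2 * b + 2) * oddHeight t := by rw [pow_add, pow_mul]; ring
      _ ≤ oddHeight t ^ (2 * b + 2) * oddHeight t := by gcongr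
      _ = oddHeight t ^ (2 * b + 3) := (pow_succ _ _).symm
      _ ≤ oddHeight t ^ m := pow_le_pow_right₀ (by linarith) hm
      _ ≤ 2 * sqHeight s := h.trans (by linarith [oddHeight_le_sqHeight s])
  have hden' : (s.den : ℤ) ^ 2 ≤ 2 * oddHeight t :=
    le_trans (by gcongr) (den_sq_le_two_mul_oddHeight t)
  have hnum : 4 * 16 ^ b * (s.den : ℤ) ^ 2 ≤ s.num ^ 2 := by
    have h16 : (1 : ℤ) ≤ 16 ^ b := one_le_pow₀ (by norm_num)
    nlinarith
  have hs : (2 * 4 ^ b : ℚ) ^ 2 ≤ s ^ 2 := by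
    have hnumℚ : (4 * 16 ^ b : ℚ) * s.den ^ 2 ≤ s.num ^ 2 := by exact_mod_cast hnum
    have : (0 : ℚ) < s.den := by exact_mod_cast s.den_pos
    rw [← s.num_div_den, div_pow, le_div_iff₀ (by positivity), mul_pow, ← pow_mul, mul_comm b,
      pow_mul]
    norm_num1
    exact hnumℚ
  exact (abs_of_pos (by positivity : (0 : ℚ) < 2 * 4 ^ b)).symm.trans_le (sq_le_sq.1 hs)

end HeightComparison

namespace congruentCurve

variable {N a b : ℕ} [NeZero N] {P : (congruentCurve N).Point}

lemma normX_nsmul_nsmul_mem_Ioo (hb : 3 ≤ b) (hab : b ≤ a) (hP : 2 • P ≠ 0)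
    (haP : 2 • a • P ≠ 0) (hden : (normX (a • P)).den ≤ (normX P).den) :
    normX (b • a • P) ∈ Set.Ioo 0 (normX (a • P)) := by
  have hlarge : 2 * 4 ^ b ≤ |normX (a • P)| :=
    le_abs_of_oddHeight_pow_le (five_le_oddHeight (mul_normX_pos hP).ne') hden (by nlinarith)
      (oddHeight_pow_sq_le P a)
  have hpos : 0 < normX (a • P) := by
    have h4 : (1 : ℚ) ≤ 4 ^ b := one_le_pow₀ (by norm_num)
    have hsq : 1 < normX (a • P) ^ 2 := (one_lt_sq_iff_one_lt_abs _).2 (by linarith)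
    exact pos_of_mul_pos_left (mul_normX_pos haP) (by linarith)
  rw [abs_of_pos hpos] at hlarge
  exact normX_nsmul_mem_Ioo (by omega) hlarge

theorem not_den_normX_nsmul_nsmul_le (hb : 3 ≤ b) (hab : b ≤ a) (hP : 2 • P ≠ 0)
    (haP : 2 • a • P ≠ 0) (hden : (normX (a • P)).den ≤ (normX P).den) :
    ¬(normX (b • a • P)).den ≤ (normX P).den := by
  intro hden'
  set H := oddHeight (normX P)
  set Y := oddHeight (normX (a • P))
  have hH : 5 ≤ H := five_le_oddHeight (mul_normX_pos hP).ne'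
  have hY : 5 ≤ Y := five_le_oddHeight (mul_normX_pos haP).ne'
  have hHY : H ≤ 2 * Y :=
    (le_self_pow₀ (by linarith) (pow_ne_zero 2 (by omega))).trans (oddHeight_pow_sq_le P a)
  obtain ⟨hpos, hlt⟩ := normX_nsmul_nsmul_mem_Ioo hb hab hP haP hden
  have hw : ((normX (b • a • P)).den : ℤ) ^ 2 ≤ 2 * H :=
    le_trans (by gcongr) (den_sq_le_two_mul_oddHeight (normX P))
  have hupper : Y ^ b ^ 2 ≤ 16 * Y ^ 2 :=
    calc Y ^ b ^ 2 ≤ 2 * oddHeight (normX (b • a • P)) := oddHeight_pow_sq_le (a • P) b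
      _ ≤ 2 * sqHeight (normX (b • a • P)) := by gcongr; exact oddHeight_le_sqHeight _
      _ ≤ 2 * ((normX (b • a • P)).den ^ 2 * sqHeight (normX (a • P))) := by
          gcongr; exact sqHeight_le_den_sq_mul_sqHeight hpos.le hlt.le
      _ ≤ 2 * ((2 * (2 * Y)) * (2 * Y)) := by
          gcongr
          · exact (sqHeight_pos _).le
          · exact hw.trans (by linarith)
          · exact sqHeight_le_two_mul_oddHeight _
      _ = 16 * Y ^ 2 := by ring
  refine hupper.not_gt ?_
  calc 16 * Y ^ 2 < 5 ^ 3 * Y ^ 2 := by gcongr; norm_num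
    _ ≤ Y ^ 3 * Y ^ 2 := by gcongr
    _ = Y ^ 5 := by ring
    _ ≤ Y ^ b ^ 2 := pow_le_pow_right₀ (by linarith) (by nlinarith)

end congruentCurve

lemma exists_odd_mul_eq_of_not_prime {n : ℕ} (hn : 2 ≤ n) (hodd : Odd n) (hnp : ¬n.Prime) :
    ∃ a b, n = a * b ∧ Odd a ∧ Odd b ∧ 3 ≤ b ∧ b ≤ a := by
  have hn' : n = n / n.minFac * n.minFac := (Nat.div_mul_cancel n.minFac_dvd).symm
  obtain ⟨ha, hb⟩ := Nat.odd_mul.1 (hn' ▸ hodd)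
  refine ⟨_, _, hn', ha, hb, ?_, Nat.minFac_le_div (by omega) hnp⟩
  have := (Nat.minFac_prime (by omega : n ≠ 1)).two_le
  rcases hb with ⟨k, hk⟩
  omega

lemma IsIntegralPoint.den_xCoord_eq_one {N : ℕ} {P : (congruentCurve N).Point}
    (h : IsIntegralPoint P) : (congruentCurve.xCoord P).den = 1 := by
  obtain ⟨x, y, hxy, rfl, hx⟩ := h
  exact hx

theorem congruentCurve.den_xCoord_mul_nsmul_ne_one {N a b : ℕ} {P : (congruentCurve N).Point}
    (hN : Squarefree N) (ha : Odd a) (hb : Odd b) (hb₃ : 3 ≤ b) (hab : b ≤ a)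
    (hP : ∀ m : ℕ, 0 < m → m • P ≠ 0) (hPd : (xCoord P).den = 1) :
    (xCoord ((a * b) • P)).den ≠ 1 := by
  intro hden
  have : NeZero N := ⟨hN.ne_zero⟩
  have hP₀ : P ≠ 0 := one_nsmul P ▸ hP 1 one_pos
  have haP : a • P ≠ 0 := hP a (by omega)
  have habP : (a * b) • P ≠ 0 := hP _ (Nat.mul_pos (by omega) (by omega))
  have h2aP : 2 • a • P ≠ 0 := mul_nsmul P a 2 ▸ hP _ (by omega)
  have hdena : (xCoord (a • P)).den = 1 := by
    rw [mul_nsmul] at hden habP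
    exact den_xCoord_eq_one_of_nsmul habP hden
  have le_den {k : ℕ} (hk : Odd k) (hkP : k • P ≠ 0) (hkd : (xCoord (k • P)).den = 1) :
      (normX (k • P)).den ≤ (normX P).den :=
    Nat.le_of_dvd (Rat.den_pos _) (den_normX_nsmul_dvd hN hk hP₀ hPd hkP hkd)
  refine not_den_normX_nsmul_nsmul_le hb₃ hab (hP 2 two_pos) h2aP (le_den ha haP hdena) ?_
  rw [← mul_nsmul]
  exact le_den (ha.mul hb) habP hden

theorem stmt8 (N : ℕ) (hN : 0 < N) (hsq : Squarefree N)
    (P : (congruentCurve N).Point)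
    (hPint : IsIntegralPoint P)
    (hPtors : ∀ m : ℤ, 1 ≤ m → m • P ≠ 0)
    (n : ℤ) (hn : 2 ≤ n)
    (hint : IsIntegralPoint (n • P)) :
    Prime n := by
  lift n to ℕ using by omega
  have hP (m : ℕ) (hm : 0 < m) : m • P ≠ 0 := by
    rw [← natCast_zsmul]
    exact hPtors m (by exact_mod_cast hm)
  have hden := hint.den_xCoord_eq_one
  rw [natCast_zsmul] at hden
  by_contra hnp
  rcases n.even_or_odd' with ⟨k, rfl | hodd⟩
  · rw [mul_comm, mul_nsmul] at hden
    refine congruentCurve.den_xCoord_two_nsmul_ne_one hsq ?_ hden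
    rw [← mul_nsmul]
    exact hP _ (by omega)
  · obtain ⟨a, b, rfl, ha, hb, hb₃, hab⟩ := exists_odd_mul_eq_of_not_prime (by exact_mod_cast hn)
      ⟨k, hodd⟩ (mt Nat.prime_iff_prime_int.1 hnp)
    exact congruentCurve.den_xCoord_mul_nsmul_ne_one hsq ha hb hb₃ hab hP
      hPint.den_xCoord_eq_one hden
end

section
/- Let P be a polynomial with real coefficients of degree d, and let P^{(k)} denote its k-th derivative. Suppose W > 0 is a real number such that W² > 2^{−k}·P^{(k)}(log W) for every 0 ≤ k ≤ d. Then x² > P(log x) for all real x ≥ W. -/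
/-!
Put `t = log x - log W ≥ 0`, so that `x ^ c = W ^ c * exp (c * t)`. The bounds on the derivatives of
`P` at `log W` say that the Taylor coefficients of `t ↦ P (log W + t)` are dominated by those of
`t ↦ W ^ c * exp (c * t)`, strictly at order zero. Since `t ≥ 0`, the polynomial stays below a
partial sum of the exponential series, hence below its total sum.
-/

open Polynomial

theorem eval_add_eq_sum_iterate_derivative {K : Type*} [Semifield K] [CharZero K]
    (P : K[X]) (a t : K) :
    P.eval (a + t) = ∑ k ∈ Finset.range (P.natDegree + 1),
      (derivative^[k] P).eval a * (t ^ k / k.factorial) := by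
  have taylor_coeff_eq (k : ℕ) :
      (taylor a P).coeff k = (derivative^[k] P).eval a / k.factorial := by
    rw [taylor_coeff, ← factorial_smul_hasseDeriv, LinearMap.smul_apply, eval_smul, nsmul_eq_mul,
      mul_div_cancel_left₀ _ (Nat.cast_ne_zero.mpr k.factorial_ne_zero)]
  rw [add_comm, ← taylor_eval, eval_eq_sum_range, natDegree_taylor]
  refine Finset.sum_congr rfl fun k _ ↦ ?_
  rw [taylor_coeff_eq, div_mul_eq_mul_div, mul_div_assoc]

theorem eval_add_lt_mul_exp {P : ℝ[X]} {a c C t : ℝ} (hc : 0 ≤ c) (hC : 0 ≤ C) (ht : 0 ≤ t)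
    (h_zero : P.eval a < C)
    (h_pos : ∀ k, 0 < k → k ≤ P.natDegree → (derivative^[k] P).eval a ≤ C * c ^ k) :
    P.eval (a + t) < C * Real.exp (c * t) := by
  have term_le {k : ℕ} (hk : k < P.natDegree) :
      (derivative^[k + 1] P).eval a * (t ^ (k + 1) / (k + 1).factorial) ≤
        C * ((c * t) ^ (k + 1) / (k + 1).factorial) :=
    calc
      _ ≤ C * c ^ (k + 1) * (t ^ (k + 1) / (k + 1).factorial) := by
        gcongr
        exact h_pos (k + 1) k.succ_pos hk
      _ = C * ((c * t) ^ (k + 1) / (k + 1).factorial) := by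
        rw [mul_pow]
        ring
  calc
    P.eval (a + t) = ∑ k ∈ Finset.range (P.natDegree + 1),
        (derivative^[k] P).eval a * (t ^ k / k.factorial) :=
      eval_add_eq_sum_iterate_derivative P a t
    _ < ∑ k ∈ Finset.range (P.natDegree + 1), C * ((c * t) ^ k / k.factorial) := by
      rw [Finset.sum_range_succ', Finset.sum_range_succ']
      refine add_lt_add_of_le_of_lt
        (Finset.sum_le_sum fun k hk ↦ term_le (Finset.mem_range.mp hk)) ?_
      simpa using h_zero
    _ = C * ∑ k ∈ Finset.range (P.natDegree + 1), (c * t) ^ k / k.factorial :=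
      (Finset.mul_sum ..).symm
    _ ≤ C * Real.exp (c * t) := by
      gcongr
      exact Real.sum_le_exp_of_nonneg (mul_nonneg hc ht) _

theorem rpow_mul_exp_log_sub_log {x y : ℝ} (hx : 0 < x) (hy : 0 < y) (c : ℝ) :
    x ^ c * Real.exp (c * (Real.log y - Real.log x)) = y ^ c := by
  rw [Real.rpow_def_of_pos hx, Real.rpow_def_of_pos hy, ← Real.exp_add]
  congr 1
  ring

theorem stmt11_general (P : ℝ[X]) {c W : ℝ} (hc : 0 < c) (hW : 0 < W)
    (h_zero : P.eval (Real.log W) < W ^ c)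
    (h_pos : ∀ k : ℕ, 0 < k → k ≤ P.natDegree →
      c ^ (-(k : ℤ)) * (derivative^[k] P).eval (Real.log W) ≤ W ^ c) :
    ∀ x : ℝ, W ≤ x → P.eval (Real.log x) < x ^ c := by
  intro x hWx
  have log_sub_nonneg : 0 ≤ Real.log x - Real.log W := sub_nonneg.mpr (Real.log_le_log hW hWx)
  have derivative_le (k : ℕ) (hk : 0 < k) (hkP : k ≤ P.natDegree) :
      (derivative^[k] P).eval (Real.log W) ≤ W ^ c * c ^ k := by
    have h := h_pos k hk hkP
    rwa [zpow_neg, zpow_natCast, inv_mul_le_iff₀' (pow_pos hc k)] at h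
  have key := eval_add_lt_mul_exp hc.le (Real.rpow_nonneg hW.le c) log_sub_nonneg h_zero
    derivative_le
  rwa [add_sub_cancel, rpow_mul_exp_log_sub_log hW (hW.trans_le hWx)] at key

theorem stmt11 (P : Polynomial ℝ) (d : ℕ) (hd : P.natDegree = d)
    (W : ℝ) (hW : 0 < W)
    (h : ∀ k : ℕ, k ≤ d →
      (2 : ℝ) ^ (-(k : ℤ)) * (Polynomial.derivative^[k] P).eval (Real.log W) < W ^ 2) :
    ∀ x : ℝ, W ≤ x → P.eval (Real.log x) < x ^ 2 := by
  simpa only [Real.rpow_two] using stmt11_general P two_pos hW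
    (by simpa using h 0 d.zero_le) (fun k _ hk ↦ by simpa using (h k (hk.trans_eq hd)).le)
end

section
/- Let A, B be real numbers, not both zero, let f(t) = t³ + A·t + B, and let e₁, e₂, e₃ ∈ ℂ be the (complex) roots of f counted with multiplicity. Let x₀ be a real number with x₀ ≥ 2·max{|e₁|, |e₂|, |e₃|}. Then f(t) > 0 for all t ≥ x₀, and the improper integral I = (1/2)·∫_{x₀}^{∞} dt/√(f(t)) satisfies (√2/4)·x₀^{−1/2} ≤ I ≤ 2√2·x₀^{−1/2}. -/
open MeasureTheory

/-!
If all roots have norm at most `M` then `|A| ≤ 3 * M ^ 2` and `|B| ≤ M ^ 3`. Since `f` has no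
`t ^ 2` term, for `t ≥ 2 * M` it differs from `t ^ 3` by at most `(3 / 4 + 1 / 8) * t ^ 3`, so it is
positive and comparable to `t ^ 3`, and the integral of `1 / √f` is comparable to that of
`t ^ (-3 / 2)`. (Estimating the three factors `t - eᵢ` separately would bound `|f t|` but not
determine its sign.)
-/

theorem depressed_cubic_coeffs_eq_of_eq_prod {R : Type*} [CommRing R] [NoZeroDivisors R]
    [NeZero (2 : R)] {a b e₁ e₂ e₃ : R}
    (h : ∀ t, t ^ 3 + a * t + b = (t - e₁) * (t - e₂) * (t - e₃)) :
    a = e₁ * e₂ + e₁ * e₃ + e₂ * e₃ ∧ b = -(e₁ * e₂ * e₃) := by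
  constructor
  · apply mul_left_cancel₀ (two_ne_zero (α := R))
    linear_combination h 1 - h (-1)
  · linear_combination h 0

section SeminormedRing

variable {R : Type*} [SeminormedRing R] {x y z : R} {M : ℝ}

theorem norm_mul_add_mul_add_mul_le (hx : ‖x‖ ≤ M) (hy : ‖y‖ ≤ M) (hz : ‖z‖ ≤ M) :
    ‖x * y + x * z + y * z‖ ≤ 3 * M ^ 2 :=
  calc
    ‖x * y + x * z + y * z‖ ≤ ‖x * y‖ + ‖x * z‖ + ‖y * z‖ := norm_add₃_le
    _ ≤ M * M + M * M + M * M := by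
      gcongr <;> exact norm_mul_le_of_le ‹_› ‹_›
    _ = 3 * M ^ 2 := by ring

theorem norm_mul_mul_le_pow_three (hx : ‖x‖ ≤ M) (hy : ‖y‖ ≤ M) (hz : ‖z‖ ≤ M) :
    ‖x * y * z‖ ≤ M ^ 3 :=
  calc
    ‖x * y * z‖ ≤ M * M * M := norm_mul_le_of_le (norm_mul_le_of_le hx hy) hz
    _ = M ^ 3 := by ring

end SeminormedRing

theorem depressed_cubic_norm_coeffs_le {K : Type*} [NormedField K] [NeZero (2 : K)]
    {a b e₁ e₂ e₃ : K} {M : ℝ} (h : ∀ t, t ^ 3 + a * t + b = (t - e₁) * (t - e₂) * (t - e₃))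
    (h₁ : ‖e₁‖ ≤ M) (h₂ : ‖e₂‖ ≤ M) (h₃ : ‖e₃‖ ≤ M) : ‖a‖ ≤ 3 * M ^ 2 ∧ ‖b‖ ≤ M ^ 3 := by
  obtain ⟨rfl, rfl⟩ := depressed_cubic_coeffs_eq_of_eq_prod h
  rw [norm_neg]
  exact ⟨norm_mul_add_mul_add_mul_le h₁ h₂ h₃, norm_mul_mul_le_pow_three h₁ h₂ h₃⟩

theorem pos_of_norm_coeffs_le {E : Type*} [NormedAddCommGroup E] {a b : E} {M : ℝ} (hM : 0 ≤ M)
    (ha : ‖a‖ ≤ 3 * M ^ 2) (hb : ‖b‖ ≤ M ^ 3) (hab : ¬(a = 0 ∧ b = 0)) : 0 < M := by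
  refine hM.lt_of_ne' ?_
  rintro rfl
  exact hab ⟨by simpa using ha, by simpa using hb⟩

section Growth

variable {A B M t : ℝ}

theorem abs_mul_add_le_of_abs_coeffs_le (hM : 0 ≤ M) (hA : |A| ≤ 3 * M ^ 2) (hB : |B| ≤ M ^ 3)
    (ht : 2 * M ≤ t) : |A * t + B| ≤ 7 / 8 * t ^ 3 := by
  have ht₀ : 0 ≤ t := by linarith
  have hMt : M ≤ t / 2 := by linarith
  calc
    |A * t + B| ≤ |A| * t + |B| := by
      simpa only [abs_mul, abs_of_nonneg ht₀] using abs_add_le (A * t) B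
    _ ≤ 3 * M ^ 2 * t + M ^ 3 := by gcongr
    _ ≤ 3 * (t / 2) ^ 2 * t + (t / 2) ^ 3 := by gcongr
    _ = 7 / 8 * t ^ 3 := by ring

theorem depressed_cubic_mem_Icc (hM : 0 ≤ M) (hA : |A| ≤ 3 * M ^ 2) (hB : |B| ≤ M ^ 3)
    (ht : 2 * M ≤ t) : t ^ 3 + A * t + B ∈ Set.Icc (1 / 8 * t ^ 3) (15 / 8 * t ^ 3) := by
  have h := abs_le.1 (abs_mul_add_le_of_abs_coeffs_le hM hA hB ht)
  constructor <;> linarith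

end Growth

section Integral

variable {f : ℝ → ℝ} {a c C p t y : ℝ}

theorem one_div_sqrt_const_mul_rpow (ht : 0 ≤ t) :
    1 / √(c * t ^ p) = (√c)⁻¹ * t ^ (-(p / 2)) := by
  rw [Real.sqrt_mul' c (Real.rpow_nonneg ht p), Real.sqrt_eq_rpow (t ^ p), ← Real.rpow_mul ht,
    mul_one_div, Real.rpow_neg ht, one_div, mul_inv]

theorem integrableOn_Ioi_one_div_sqrt_const_mul_rpow (hp : 2 < p) (ha : 0 < a) :
    IntegrableOn (fun t ↦ 1 / √(c * t ^ p)) (Set.Ioi a) := by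
  have h : IntegrableOn (fun t : ℝ ↦ (√c)⁻¹ * t ^ (-(p / 2))) (Set.Ioi a) :=
    (integrableOn_Ioi_rpow_of_lt (by linarith) ha).const_mul _
  exact h.congr_fun (fun t ht ↦ (one_div_sqrt_const_mul_rpow (ha.trans ht).le).symm)
    measurableSet_Ioi

theorem integral_Ioi_one_div_sqrt_const_mul_rpow (hp : 2 < p) (ha : 0 < a) :
    ∫ t in Set.Ioi a, 1 / √(c * t ^ p) = (√c)⁻¹ * (a ^ (1 - p / 2) / (p / 2 - 1)) := by
  rw [setIntegral_congr_fun measurableSet_Ioi fun t ht ↦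
      one_div_sqrt_const_mul_rpow (ha.trans ht).le,
    integral_const_mul, integral_Ioi_rpow_of_lt (by linarith) ha, neg_div, ← div_neg]
  ring_nf

theorem one_div_sqrt_le_of_const_mul_rpow_le (hc : 0 < c) (ht : 0 < t) (h : c * t ^ p ≤ y) :
    1 / √y ≤ 1 / √(c * t ^ p) :=
  one_div_le_one_div_of_le (by positivity) (Real.sqrt_le_sqrt h)

theorem integrableOn_Ioi_one_div_sqrt_of_const_mul_rpow_le
    (hf : AEMeasurable f (volume.restrict (Set.Ioi a))) (hp : 2 < p) (ha : 0 < a) (hc : 0 < c)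
    (h : ∀ t ∈ Set.Ioi a, c * t ^ p ≤ f t) :
    IntegrableOn (fun t ↦ 1 / √(f t)) (Set.Ioi a) := by
  refine (integrableOn_Ioi_one_div_sqrt_const_mul_rpow (c := c) hp ha).mono'
    (hf.sqrt.const_div 1).aestronglyMeasurable
    (ae_restrict_of_forall_mem measurableSet_Ioi fun t ht ↦ ?_)
  rw [Real.norm_of_nonneg (by positivity)]
  exact one_div_sqrt_le_of_const_mul_rpow_le hc (ha.trans ht) (h t ht)

theorem integral_Ioi_one_div_sqrt_le (hp : 2 < p) (ha : 0 < a) (hc : 0 < c)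
    (h : ∀ t ∈ Set.Ioi a, c * t ^ p ≤ f t) :
    ∫ t in Set.Ioi a, 1 / √(f t) ≤ (√c)⁻¹ * (a ^ (1 - p / 2) / (p / 2 - 1)) := by
  rw [← integral_Ioi_one_div_sqrt_const_mul_rpow hp ha]
  exact integral_mono_of_nonneg (ae_of_all _ fun t ↦ by positivity)
    (integrableOn_Ioi_one_div_sqrt_const_mul_rpow hp ha)
    (ae_restrict_of_forall_mem measurableSet_Ioi fun t ht ↦
      one_div_sqrt_le_of_const_mul_rpow_le hc (ha.trans ht) (h t ht))

theorem le_integral_Ioi_one_div_sqrt (hp : 2 < p) (ha : 0 < a)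
    (hf : IntegrableOn (fun t ↦ 1 / √(f t)) (Set.Ioi a)) (hpos : ∀ t ∈ Set.Ioi a, 0 < f t)
    (h : ∀ t ∈ Set.Ioi a, f t ≤ C * t ^ p) :
    (√C)⁻¹ * (a ^ (1 - p / 2) / (p / 2 - 1)) ≤ ∫ t in Set.Ioi a, 1 / √(f t) := by
  rw [← integral_Ioi_one_div_sqrt_const_mul_rpow hp ha]
  exact setIntegral_mono_on (integrableOn_Ioi_one_div_sqrt_const_mul_rpow hp ha) hf
    measurableSet_Ioi fun t ht ↦
      one_div_le_one_div_of_le (Real.sqrt_pos.2 (hpos t ht)) (Real.sqrt_le_sqrt (h t ht))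

theorem integral_Ioi_one_div_sqrt_mem_Icc (hf : AEMeasurable f (volume.restrict (Set.Ioi a)))
    (hp : 2 < p) (ha : 0 < a) (hc : 0 < c)
    (h : ∀ t ∈ Set.Ioi a, f t ∈ Set.Icc (c * t ^ p) (C * t ^ p)) :
    ∫ t in Set.Ioi a, 1 / √(f t) ∈
      Set.Icc ((√C)⁻¹ * (a ^ (1 - p / 2) / (p / 2 - 1)))
        ((√c)⁻¹ * (a ^ (1 - p / 2) / (p / 2 - 1))) := by
  have hlower : ∀ t ∈ Set.Ioi a, c * t ^ p ≤ f t := fun t ht ↦ (h t ht).1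
  have hpos : ∀ t ∈ Set.Ioi a, 0 < f t := fun t ht ↦
    (mul_pos hc (Real.rpow_pos_of_pos (ha.trans ht) p)).trans_le (hlower t ht)
  have hint := integrableOn_Ioi_one_div_sqrt_of_const_mul_rpow_le hf hp ha hc hlower
  exact ⟨le_integral_Ioi_one_div_sqrt hp ha hint hpos fun t ht ↦ (h t ht).2,
    integral_Ioi_one_div_sqrt_le hp ha hc hlower⟩

theorem integral_Ioi_one_div_sqrt_mem_Icc_of_cubic_growth
    (hf : AEMeasurable f (volume.restrict (Set.Ioi a))) (ha : 0 < a) (hc : 0 < c)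
    (h : ∀ t ∈ Set.Ioi a, f t ∈ Set.Icc (c * t ^ 3) (C * t ^ 3)) :
    ∫ t in Set.Ioi a, 1 / √(f t) ∈
      Set.Icc ((√C)⁻¹ * (2 * a ^ (-(1 / 2 : ℝ)))) ((√c)⁻¹ * (2 * a ^ (-(1 / 2 : ℝ)))) := by
  have hvalue : a ^ (1 - 3 / 2 : ℝ) / (3 / 2 - 1) = 2 * a ^ (-(1 / 2 : ℝ)) := by
    rw [show (1 - 3 / 2 : ℝ) = -(1 / 2) by norm_num]
    ring
  rw [← hvalue]
  exact integral_Ioi_one_div_sqrt_mem_Icc hf (by norm_num) ha hc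
    (by simpa only [Real.rpow_ofNat] using h)

end Integral

theorem sqrt_eight : √(8 : ℝ) = 2 * √2 := by
  rw [show (8 : ℝ) = 2 ^ 2 * 2 by norm_num, Real.sqrt_mul (by norm_num),
    Real.sqrt_sq (by norm_num)]

theorem inv_sqrt_eight : (√(8 : ℝ))⁻¹ = √2 / 4 := by
  rw [sqrt_eight, mul_inv, ← Real.sqrt_div_self]
  ring

theorem inv_sqrt_one_div_eight : (√(1 / 8 : ℝ))⁻¹ = 2 * √2 := by
  rw [one_div, Real.sqrt_inv, inv_inv, sqrt_eight]

theorem stmt12 (A B : ℝ) (hAB : ¬(A = 0 ∧ B = 0)) (e₁ e₂ e₃ : ℂ)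
    (hroots : ∀ t : ℂ, t ^ 3 + (A : ℂ) * t + (B : ℂ) = (t - e₁) * (t - e₂) * (t - e₃))
    (x₀ : ℝ)
    (hx₀ : 2 * max ‖e₁‖ (max ‖e₂‖ ‖e₃‖) ≤ x₀) :
    (∀ t : ℝ, x₀ ≤ t → 0 < t ^ 3 + A * t + B) ∧
    Real.sqrt 2 / 4 * x₀ ^ (-(1 / 2 : ℝ)) ≤
      (1 / 2) * ∫ t in Set.Ioi x₀, 1 / Real.sqrt (t ^ 3 + A * t + B) ∧
    (1 / 2) * (∫ t in Set.Ioi x₀, 1 / Real.sqrt (t ^ 3 + A * t + B)) ≤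
      2 * Real.sqrt 2 * x₀ ^ (-(1 / 2 : ℝ)) := by
  set M := max ‖e₁‖ (max ‖e₂‖ ‖e₃‖)
  have h₁ : ‖e₁‖ ≤ M := le_max_left _ _
  have h₂ : ‖e₂‖ ≤ M := le_max_of_le_right (le_max_left _ _)
  have h₃ : ‖e₃‖ ≤ M := le_max_of_le_right (le_max_right _ _)
  obtain ⟨hA, hB⟩ : |A| ≤ 3 * M ^ 2 ∧ |B| ≤ M ^ 3 := by
    simpa only [Complex.norm_real, Real.norm_eq_abs]
      using depressed_cubic_norm_coeffs_le hroots h₁ h₂ h₃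
  have hM : 0 < M := pos_of_norm_coeffs_le ((norm_nonneg e₁).trans h₁) hA hB hAB
  have hx : 0 < x₀ := by linarith
  have hcube (t : ℝ) (ht : x₀ ≤ t) : 0 < t ^ 3 := pow_pos (hx.trans_le ht) 3
  have hf (t : ℝ) (ht : x₀ ≤ t) : t ^ 3 + A * t + B ∈ Set.Icc (1 / 8 * t ^ 3) (8 * t ^ 3) :=
    Set.Icc_subset_Icc_right (by linarith [hcube t ht])
      (depressed_cubic_mem_Icc hM.le hA hB (hx₀.trans ht))
  obtain ⟨hlower, hupper⟩ := integral_Ioi_one_div_sqrt_mem_Icc_of_cubic_growth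
    (by fun_prop) hx (by norm_num) fun t ht ↦ hf t (le_of_lt ht)
  rw [inv_sqrt_eight] at hlower
  rw [inv_sqrt_one_div_eight] at hupper
  exact ⟨fun t ht ↦ by linarith [hcube t ht, (hf t ht).1], by linarith, by linarith⟩
end
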